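/- arXiv:2510.13305 — 4 statements merged into one kernel-verified Lean document; each statement's English description precedes it below -/
import Mathlib

section
/- Let X and Y be open subsets of ℂ and f : X → ℂ holomorphic with f(X) ⊆ Y. Then f : X → Y is a branched covering if and only if the following three conditions hold: f is nowhere constant, f has no asymptotic value in Y, and the set of critical values of f has no accumulation point in Y. -/
/-- `φ` is a biholomorphism from `U` onto `V`. -/
def Biholo (φ : ℂ → ℂ) (U V : Set ℂ) : Prop :=
  DifferentiableOn ℂ φ U ∧ Set.BijOn φ U V ∧
    ∃ φ' : ℂ → ℂ, DifferentiableOn ℂ φ' V ∧ Set.InvOn φ' φ U V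

/-- `f : X → Y` is a branched covering: every `y ∈ Y` has an open neighbourhood
`V ⊆ Y`, biholomorphic to `𝔻` via `ψ` with `ψ y = 0`, such that on every connected
component `U` of `f⁻¹(V)`, `ψ ∘ f` is equivalent to `z ↦ z^d` on `𝔻` for some `d ≥ 1`. -/
def IsBranchedCovering (f : ℂ → ℂ) (X Y : Set ℂ) : Prop :=
  ∀ y ∈ Y, ∃ V : Set ℂ, IsOpen V ∧ y ∈ V ∧ V ⊆ Y ∧
    ∃ ψ : ℂ → ℂ, Biholo ψ V (Metric.ball (0:ℂ) 1) ∧ ψ y = 0 ∧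
      ∀ U : Set ℂ,
        (∃ x ∈ {z ∈ X | f z ∈ V}, U = connectedComponentIn {z ∈ X | f z ∈ V} x) →
        ∃ d : ℕ, 1 ≤ d ∧ ∃ φ : ℂ → ℂ, Biholo φ U (Metric.ball (0:ℂ) 1) ∧
          ∀ z ∈ U, ψ (f z) = (φ z) ^ d

/-- `f` is constant on no nonempty open subset of `X`. -/
def NowhereConstantOn (f : ℂ → ℂ) (X : Set ℂ) : Prop :=
  ∀ U : Set ℂ, IsOpen U → U.Nonempty → U ⊆ X → ¬ ∃ c : ℂ, ∀ z ∈ U, f z = c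

/-- `y` is an asymptotic value of `f : X → ℂ`. -/
def IsAsympVal (f : ℂ → ℂ) (X : Set ℂ) (y : ℂ) : Prop :=
  ∃ γ : ℝ → ℂ,
    ContinuousOn γ (Set.Ico 0 1) ∧
    (∀ t ∈ Set.Ico (0:ℝ) 1, γ t ∈ X) ∧
    (∀ K : Set ℂ, K ⊆ X → IsCompact K →
      ∃ t₀ ∈ Set.Ico (0:ℝ) 1, ∀ t, t₀ ≤ t → t < 1 → γ t ∉ K) ∧
    Filter.Tendsto (fun t => f (γ t)) (nhdsWithin 1 (Set.Ico 0 1)) (nhds y)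

/-- `y` is an asymptotic value of `f : X → Y`. -/
def IsAsympValIn (f : ℂ → ℂ) (X Y : Set ℂ) (y : ℂ) : Prop :=
  y ∈ Y ∧ IsAsympVal f X y

/-!
If no point of an open set `D` is a critical or an asymptotic value of `f`, then `f` is a covering
over `D`: it is a local homeomorphism there, and a partial lift of a path in `D` cannot leave every
compact subset of `X`, so it has a cluster point, through which it can be continued. Around a point
`y` which is not an accumulation point of critical values, normalise a small disk to the unit disk
`𝔻` with centre `y = 0`, so that this applies to `D = 𝔻 \ {0}`. As `0` is not an asymptotic value
either, lifting a segment towards `0` shows that every component of `f⁻¹(𝔻)` contains a zero of `f`.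
Near that zero `f (Φ ζ) = ζ ^ d` for a local biholomorphism `Φ`. Lifting the homotopy
`((δ / 2 + t * (1 - δ / 2)) * ζ) ^ d` along the rays extends `Φ` to all of `𝔻`; the extension is
injective since lifts are unique, and its image is open and relatively closed in `f⁻¹(𝔻)`, hence
the whole component.

Conversely, in the local models `ζ ↦ ζ ^ d` the only possible critical value is the centre, and a
path along which `f` tends to the centre stays eventually in the compact set `‖ζ‖ ≤ 1 / 2`.
-/

open Filter Metric Set Topology

/-! ### Lifting paths through local homeomorphisms -/

section PathLifting

variable {E B : Type*} [TopologicalSpace E] {p : E → B} {α : ℝ → B} {e : E}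

/-- `γ` lifts the path `α` through `p` on the set of times `J`, starting at `e`. Paths are functions
on all of `ℝ` whose values outside `J` are irrelevant. -/
structure IsPathLift (p : E → B) (α : ℝ → B) (e : E) (J : Set ℝ) (γ : ℝ → E) : Prop where
  continuousOn : ContinuousOn γ J
  map_zero : γ 0 = e
  lifts : ∀ t ∈ J, p (γ t) = α t

namespace IsPathLift

variable {J J' : Set ℝ} {γ γ' : ℝ → E} {b s : ℝ} {x : E}

theorem mono (h : IsPathLift p α e J γ) (hJ : J' ⊆ J) : IsPathLift p α e J' γ :=
  ⟨h.continuousOn.mono hJ, h.map_zero, fun t ht => h.lifts t (hJ ht)⟩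

variable [TopologicalSpace B]

theorem eqOn [T2Space E] (hp : IsLocalHomeomorph p) (hJ : IsPreconnected J) (h0 : 0 ∈ J)
    (h : IsPathLift p α e J γ) (h' : IsPathLift p α e J γ') : EqOn γ γ' J :=
  (T2Space.isSeparatedMap p).eqOn_of_comp_eqOn hp.isLocallyInjective hJ h.continuousOn
    h'.continuousOn (fun t ht => (h.lifts t ht).trans (h'.lifts t ht).symm) h0
    (h.map_zero.trans h'.map_zero.symm)

theorem exists_extension {φ : OpenPartialHomeomorph E B} (h : IsPathLift φ α e (Icc 0 s) γ)
    (hs : 0 ≤ s) (hγs : γ s ∈ φ.source) (hα : ContinuousOn α (Icc s b))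
    (hαb : MapsTo α (Icc s b) φ.target) : ∃ γ', IsPathLift φ α e (Icc 0 b) γ' := by
  classical
  have hsplit : Icc 0 b ⊆ Icc 0 s ∪ Icc s b := fun t ht =>
    (le_total t s).imp (fun hts => ⟨ht.1, hts⟩) (fun hst => ⟨hst, ht.2⟩)
  have hsymm : φ.symm (α s) = γ s := by rw [← h.lifts s ⟨hs, le_rfl⟩, φ.left_inv hγs]
  let γ' : ℝ → E := fun t => if t ≤ s then γ t else φ.symm (α t)
  have hleft : EqOn γ' γ (Icc 0 s) := fun t ht => if_pos ht.2
  have hright : EqOn γ' (φ.symm ∘ α) (Icc s b) := by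
    intro t ht
    rcases ht.1.eq_or_lt with rfl | hst
    · simp only [γ', le_refl, if_true, Function.comp_apply, hsymm]
    · exact if_neg hst.not_ge
  refine ⟨γ', ?_, (hleft ⟨le_rfl, hs⟩).trans h.map_zero, fun t ht => ?_⟩
  · refine ContinuousOn.mono (ContinuousOn.union_of_isClosed ?_ ?_ isClosed_Icc isClosed_Icc) hsplit
    · exact h.continuousOn.congr hleft
    · exact (φ.continuousOn_symm.comp hα hαb).congr hright
  · rcases hsplit ht with hts | hst
    · rw [hleft hts, h.lifts t hts]
    · rw [hright hst, Function.comp_apply, φ.right_inv (hαb hst)]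

theorem eventually_exists_Icc (hp : IsLocalHomeomorph p) (hα : ContinuousOn α (Icc 0 b))
    (hs : s ∈ Ico 0 b) (h : IsPathLift p α e (Icc 0 s) γ) :
    ∀ᶠ u in 𝓝[>] s, ∃ γ', IsPathLift p α e (Icc 0 u) γ' := by
  obtain ⟨φ, hφ, rfl⟩ := hp (γ s)
  have hsb : Icc s b ⊆ Icc 0 b := Icc_subset_Icc_left hs.1
  have htarget : α ⁻¹' φ.target ∩ Icc s b ∈ 𝓝[≥] s := by
    rw [← nhdsWithin_Icc_eq_nhdsGE hs.2]
    refine inter_mem ?_ self_mem_nhdsWithin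
    refine ((hα s ⟨hs.1, hs.2.le⟩).mono hsb).preimage_mem_nhdsWithin (φ.open_target.mem_nhds ?_)
    exact h.lifts s ⟨hs.1, le_rfl⟩ ▸ φ.map_source hφ
  obtain ⟨u, hsu, hu⟩ := mem_nhdsGE_iff_exists_Icc_subset.1 htarget
  obtain ⟨γ', hγ'⟩ := h.exists_extension hs.1 hφ (hα.mono fun t ht => hsb (hu ht).2)
    fun t ht => (hu ht).1
  filter_upwards [Ioc_mem_nhdsGT hsu] with v hv
  exact ⟨γ', hγ'.mono (Icc_subset_Icc_right hv.2)⟩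

theorem exists_Icc_of_mapClusterPt (hp : IsLocalHomeomorph p) (hα : ContinuousOn α (Icc 0 s))
    (hs : 0 < s) (h : IsPathLift p α e (Ico 0 s) γ) (hx : p x = α s)
    (hγx : MapClusterPt x (𝓝[<] s) γ) : ∃ γ', IsPathLift p α e (Icc 0 s) γ' := by
  obtain ⟨φ, hφ, rfl⟩ := hp x
  have htarget : α ⁻¹' φ.target ∩ Icc 0 s ∈ 𝓝[≤] s := by
    rw [← nhdsWithin_Icc_eq_nhdsLE hs]
    refine inter_mem ?_ self_mem_nhdsWithin
    exact (hα s ⟨hs.le, le_rfl⟩).preimage_mem_nhdsWithin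
      (φ.open_target.mem_nhds (hx ▸ φ.map_source hφ))
  obtain ⟨l, hls, hl⟩ := mem_nhdsLE_iff_exists_Icc_subset.1 htarget
  obtain ⟨t, htφ, hlt, hts⟩ := ((hγx.frequently (φ.open_source.mem_nhds hφ)).and_eventually
    (Ioo_mem_nhdsLT hls)).exists
  have hts' : Icc t s ⊆ Icc l s := Icc_subset_Icc_left hlt.le
  have ht0 : 0 ≤ t := (hl ⟨hlt.le, hts.le⟩).2.1
  exact (h.mono (Icc_subset_Ico_right hts)).exists_extension ht0 htφ
    (hα.mono (Icc_subset_Icc_left ht0)) fun u hu => (hl (hts' hu)).1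

end IsPathLift

variable [TopologicalSpace B]

theorem exists_isPathLift_Ico_of_forall_Icc [T2Space E] (hp : IsLocalHomeomorph p) {s : ℝ}
    (hs : 0 < s) (h : ∀ t ∈ Ico 0 s, ∃ γ, IsPathLift p α e (Icc 0 t) γ) :
    ∃ γ, IsPathLift p α e (Ico 0 s) γ := by
  have : Nonempty E := ⟨e⟩
  choose! Γ hΓ using h
  have hagree : ∀ t ∈ Ico 0 s, EqOn (fun u => Γ u u) (Γ t) (Icc 0 t) := fun t ht u hu =>
    (hΓ u ⟨hu.1, hu.2.trans_lt ht.2⟩).eqOn hp isPreconnected_Icc ⟨le_rfl, hu.1⟩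
      ((hΓ t ht).mono (Icc_subset_Icc_right hu.2)) ⟨hu.1, le_rfl⟩
  refine ⟨fun t => Γ t t, fun t ht => ?_, (hΓ 0 ⟨le_rfl, hs⟩).map_zero,
    fun t ht => (hΓ t ht).lifts t ⟨ht.1, le_rfl⟩⟩
  obtain ⟨u, htu, hus⟩ := exists_between ht.2
  have hu : u ∈ Ico 0 s := ⟨ht.1.trans htu.le, hus⟩
  have hcont : ContinuousWithinAt (fun u => Γ u u) (Icc 0 u) t :=
    ((hΓ u hu).continuousOn.congr (hagree u hu)) t ⟨ht.1, htu.le⟩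
  refine hcont.mono_of_mem_nhdsWithin ?_
  filter_upwards [self_mem_nhdsWithin, mem_nhdsWithin_of_mem_nhds (Iic_mem_nhds htu)]
    with v hv hvu using ⟨hv.1, hvu⟩

theorem exists_isPathLift_Icc [T2Space E] (hp : IsLocalHomeomorph p) {b : ℝ} (hb : 0 ≤ b)
    (hα : ContinuousOn α (Icc 0 b)) (he : p e = α 0)
    (hcluster : ∀ s ∈ Ioc 0 b, ∀ γ, IsPathLift p α e (Ico 0 s) γ →
      ∃ x, p x = α s ∧ MapClusterPt x (𝓝[<] s) γ) :
    ∃ γ, IsPathLift p α e (Icc 0 b) γ := by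
  let S : Set ℝ := {s | ∃ γ, IsPathLift p α e (Icc 0 s) γ}
  have hzero : 0 ∈ S := by
    refine ⟨fun _ => e, continuousOn_const, rfl, fun t ht => ?_⟩
    rw [he, le_antisymm ht.2 ht.1]
  have hclosed : IsClosed (S ∩ Icc 0 b) := by
    refine isClosed_of_closure_subset fun s hs => ?_
    have hsb : s ∈ Icc 0 b := closure_minimal inter_subset_right isClosed_Icc hs
    refine ⟨?_, hsb⟩
    rcases hsb.1.eq_or_lt with rfl | hs0
    · exact hzero
    have hlt : ∀ t ∈ Ico 0 s, t ∈ S := by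
      intro t ht
      obtain ⟨u, htu, ⟨γ, hγ⟩, -⟩ := mem_closure_iff.1 hs (Ioi t) isOpen_Ioi ht.2
      exact ⟨γ, hγ.mono (Icc_subset_Icc_right htu.le)⟩
    obtain ⟨γ, hγ⟩ := exists_isPathLift_Ico_of_forall_Icc hp hs0 hlt
    obtain ⟨x, hx, hγx⟩ := hcluster s ⟨hs0, hsb.2⟩ γ hγ
    exact hγ.exists_Icc_of_mapClusterPt hp (hα.mono (Icc_subset_Icc_right hsb.2)) hs0 hx hγx
  refine hclosed.Icc_subset_of_forall_mem_nhdsWithin hzero ?_ ⟨hb, le_rfl⟩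
  rintro s ⟨⟨γ, hγ⟩, hsb⟩
  exact hγ.eventually_exists_Icc hp hα hsb

end PathLifting

/-! ### Half-open paths and connected components -/

section ConnectedComponent

variable {E : Type*} [TopologicalSpace E] {P : Set E} {γ : ℝ → E} {a b : ℝ}

theorem mem_connectedComponentIn_of_mapClusterPt {x : E} (hab : a < b)
    (hγ : ContinuousOn γ (Ico a b)) (hγP : MapsTo γ (Ico a b) P) (hxP : x ∈ P)
    (hx : MapClusterPt x (𝓝[<] b) γ) : x ∈ connectedComponentIn P (γ a) := by
  have hclosure : x ∈ closure (γ '' Ico a b) := mem_closure_iff_nhds.2 fun N hN => by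
    obtain ⟨t, htN, ht⟩ := ((hx.frequently hN).and_eventually (Ico_mem_nhdsLT hab)).exists
    exact ⟨γ t, htN, t, ht, rfl⟩
  have hpre : IsPreconnected (insert x (γ '' Ico a b)) :=
    (isPreconnected_Ico.image γ hγ).subset_closure (subset_insert _ _)
      (insert_subset hclosure subset_closure)
  exact hpre.subset_connectedComponentIn (mem_insert_of_mem _ ⟨a, ⟨le_rfl, hab⟩, rfl⟩)
    (insert_subset hxP (image_subset_iff.2 hγP)) (mem_insert _ _)

theorem eventually_mem_connectedComponentIn (hab : a < b) (hγ : ContinuousOn γ (Ico a b))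
    (hP : ∀ᶠ t in 𝓝[<] b, γ t ∈ P) :
    ∃ x ∈ P, ∀ᶠ t in 𝓝[<] b, γ t ∈ connectedComponentIn P x := by
  obtain ⟨c, hcb, hc⟩ := mem_nhdsLT_iff_exists_Ico_subset.1 (inter_mem hP (Ico_mem_nhdsLT hab))
  have hcP : c ∈ Ico c b := ⟨le_rfl, hcb⟩
  have himage : γ '' Ico c b ⊆ connectedComponentIn P (γ c) :=
    (isPreconnected_Ico.image γ (hγ.mono fun t ht => (hc ht).2)).subset_connectedComponentIn
      (mem_image_of_mem γ hcP) (image_subset_iff.2 fun t ht => (hc ht).1)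
  exact ⟨γ c, (hc hcP).1, mem_of_superset (Ico_mem_nhdsLT hcb) (image_subset_iff.1 himage)⟩

end ConnectedComponent

/-! ### Covering properties over regular non-asymptotic values -/

section RegularValues

variable {f : ℂ → ℂ} {X D : Set ℂ} {c : ℂ}

theorem exists_isCompact_frequently_mem_of_not_isAsympVal (hc : ¬IsAsympVal f X c) {γ : ℝ → ℂ}
    {s : ℝ} (hs : 0 < s) (hγ : ContinuousOn γ (Ico 0 s)) (hγX : MapsTo γ (Ico 0 s) X)
    (hlim : Tendsto (f ∘ γ) (𝓝[<] s) (𝓝 c)) :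
    ∃ K ⊆ X, IsCompact K ∧ ∃ᶠ t in 𝓝[<] s, γ t ∈ K := by
  by_contra! hleave
  have hscale : MapsTo (s * ·) (Ico 0 1) (Ico 0 s) := fun t ht =>
    ⟨mul_nonneg hs.le ht.1, mul_lt_of_lt_one_right hs ht.2⟩
  have htendsto : Tendsto (s * ·) (𝓝[<] 1) (𝓝[<] s) := by
    refine tendsto_nhdsWithin_iff.2 ⟨?_, ?_⟩
    · simpa using ((continuous_const_mul s).tendsto 1).mono_left nhdsWithin_le_nhds
    · filter_upwards [self_mem_nhdsWithin] with t ht using mul_lt_of_lt_one_right hs ht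
  refine hc ⟨γ ∘ (s * ·), hγ.comp (by fun_prop) hscale, fun t ht => hγX (hscale ht),
    fun K hKX hK => ?_, ?_⟩
  · obtain ⟨a, ha, haK⟩ := (mem_nhdsLT_iff_exists_Ico_subset).1
      (htendsto.eventually (hleave K hKX hK))
    refine ⟨max 0 a, ⟨le_max_left _ _, max_lt one_pos ha⟩, fun t ht ht1 => ?_⟩
    exact haK ⟨(le_max_right _ _).trans ht, ht1⟩
  · rw [nhdsWithin_Ico_eq_nhdsLT one_pos]
    exact hlim.comp htendsto

theorem exists_mapClusterPt_of_not_isAsympVal (hf : ContinuousOn f X) (hX : IsOpen X)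
    (hc : ¬IsAsympVal f X c) {γ : ℝ → ℂ} {s : ℝ} (hs : 0 < s) (hγ : ContinuousOn γ (Ico 0 s))
    (hγX : MapsTo γ (Ico 0 s) X) (hlim : Tendsto (f ∘ γ) (𝓝[<] s) (𝓝 c)) :
    ∃ x ∈ X, f x = c ∧ MapClusterPt x (𝓝[<] s) γ := by
  obtain ⟨K, hKX, hK, hfreq⟩ :=
    exists_isCompact_frequently_mem_of_not_isAsympVal hc hs hγ hγX hlim
  obtain ⟨x, hxK, hx⟩ := hK.exists_mapClusterPt_of_frequently hfreq
  have hfx : MapClusterPt (f x) (𝓝[<] s) (f ∘ γ) :=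
    hx.continuousAt_comp (hf.continuousAt (hX.mem_nhds (hKX hxK)))
  have : (𝓝 (f x) ⊓ 𝓝 c).NeBot := hfx.neBot.mono (inf_le_inf_left _ hlim)
  exact ⟨x, hKX hxK, eq_of_nhds_neBot this, hx⟩

/-- `f` is holomorphic on the open set `X` and every point of the open set `D` is neither a critical
nor an asymptotic value of `f : X → ℂ`. Then `f` restricts to a covering `X ∩ f⁻¹(D) → D`. -/
structure IsRegularOver (f : ℂ → ℂ) (X D : Set ℂ) : Prop where
  isOpen_domain : IsOpen X
  isOpen : IsOpen D
  differentiableOn : DifferentiableOn ℂ f X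
  deriv_ne_zero : ∀ z ∈ X, f z ∈ D → deriv f z ≠ 0
  not_isAsympVal : ∀ c ∈ D, ¬IsAsympVal f X c

namespace IsRegularOver

variable (h : IsRegularOver f X D)

include h

theorem isOpen_inter_preimage : IsOpen (X ∩ f ⁻¹' D) :=
  h.differentiableOn.continuousOn.isOpen_inter_preimage h.isOpen_domain h.isOpen

theorem isLocalHomeomorph : IsLocalHomeomorph (fun z : ↥(X ∩ f ⁻¹' D) => f z) := by
  rw [isLocalHomeomorph_iff_isLocalHomeomorphOn_univ]
  refine IsLocalHomeomorphOn.comp (g := f) (t := X ∩ f ⁻¹' D) (fun z hz => ?_)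
    h.isOpen_inter_preimage.isOpenEmbedding_subtypeVal.isLocalHomeomorph.isLocalHomeomorphOn
    fun z _ => z.2
  have hderiv : HasStrictDerivAt f (deriv f z) z :=
    (h.differentiableOn.analyticAt (h.isOpen_domain.mem_nhds hz.1)).hasStrictDerivAt
  have hequiv := hderiv.hasStrictFDerivAt_equiv (h.deriv_ne_zero z hz.1 hz.2)
  exact ⟨hequiv.toOpenPartialHomeomorph f, hequiv.mem_toOpenPartialHomeomorph_source, rfl⟩

theorem eqOn_of_comp_eqOn {T : Type*} [TopologicalSpace T] {S : Set T} {γ₁ γ₂ : T → ℂ} {a : T}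
    (hS : IsPreconnected S) (hγ₁ : ContinuousOn γ₁ S) (hγ₂ : ContinuousOn γ₂ S)
    (hmem : MapsTo γ₁ S (X ∩ f ⁻¹' D)) (hX : MapsTo γ₂ S X)
    (hf : EqOn (f ∘ γ₁) (f ∘ γ₂) S) (ha : a ∈ S) (heq : γ₁ a = γ₂ a) : EqOn γ₁ γ₂ S := by
  have hmem₂ : MapsTo γ₂ S (X ∩ f ⁻¹' D) := fun t ht => ⟨hX ht, by
    rw [mem_preimage, ← Function.comp_apply (f := f), ← hf ht]; exact (hmem ht).2⟩
  have := isPreconnected_iff_preconnectedSpace.1 hS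
  have hlift := (T2Space.isSeparatedMap _).eq_of_comp_eq h.isLocalHomeomorph.isLocallyInjective
    (g₁ := hmem.restrict γ₁ S _) (g₂ := hmem₂.restrict γ₂ S _) (hγ₁.mapsToRestrict hmem)
    (hγ₂.mapsToRestrict hmem₂)
    (funext fun t => hf t.2) ⟨a, ha⟩ (Subtype.ext heq)
  exact fun t ht => congrArg Subtype.val (congrFun hlift ⟨t, ht⟩)

theorem exists_isPathLift {α : ℝ → ℂ} {b : ℝ} (hb : 0 ≤ b) (hα : ContinuousOn α (Icc 0 b))
    (hαD : MapsTo α (Icc 0 b) D) (e : ↥(X ∩ f ⁻¹' D)) (he : f e = α 0) :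
    ∃ γ, IsPathLift (fun z : ↥(X ∩ f ⁻¹' D) => f z) α e (Icc 0 b) γ := by
  refine exists_isPathLift_Icc h.isLocalHomeomorph hb hα he fun s hs γ hγ => ?_
  have hsD : α s ∈ D := hαD ⟨hs.1.le, hs.2⟩
  have hlim : Tendsto (f ∘ (Subtype.val ∘ γ)) (𝓝[<] s) (𝓝 (α s)) := by
    rw [← nhdsWithin_Ico_eq_nhdsLT hs.1]
    refine Tendsto.congr' ?_ ((hα s ⟨hs.1.le, hs.2⟩).mono fun t ht => ⟨ht.1, ht.2.le.trans hs.2⟩)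
    filter_upwards [self_mem_nhdsWithin] with t ht using (hγ.lifts t ht).symm
  obtain ⟨x, hxX, hx, hcl⟩ := exists_mapClusterPt_of_not_isAsympVal
    h.differentiableOn.continuousOn h.isOpen_domain (h.not_isAsympVal _ hsD) hs.1
    (continuous_subtype_val.comp_continuousOn hγ.continuousOn) (fun t _ => (γ t).2.1) hlim
  refine ⟨⟨x, hxX, mem_preimage.2 (hx ▸ hsD)⟩, hx, ?_⟩
  rw [mapClusterPt_iff_frequently]
  intro N hN
  obtain ⟨M, hM, hMN⟩ := mem_nhds_subtype _ _ _ |>.1 hN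
  exact (hcl.frequently hM).mono fun t ht => hMN ht

theorem exists_homotopy_lift {A : Type*} [TopologicalSpace A] (F : C(unitInterval × A, ℂ))
    (hF : ∀ q, F q ∈ D) {g : A → ℂ} (hg : Continuous g) (hgX : ∀ a, g a ∈ X)
    (hfg : ∀ a, f (g a) = F (0, a)) :
    ∃ G : unitInterval × A → ℂ, Continuous G ∧ (∀ a, G (0, a) = g a) ∧
      ∀ q, G q ∈ X ∧ f (G q) = F q := by
  let e : A → ↥(X ∩ f ⁻¹' D) := fun a => ⟨g a, hgX a, mem_preimage.2 (hfg a ▸ hF (0, a))⟩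
  have hlift : ∀ a, ∃ γ, IsPathLift (fun z : ↥(X ∩ f ⁻¹' D) => f z)
      (fun t => F (projIcc 0 1 zero_le_one t, a)) (e a) (Icc 0 1) γ := fun a => by
    refine h.exists_isPathLift zero_le_one ?_ (fun t _ => hF _) (e a) (by simpa using hfg a)
    exact (F.continuous.comp (by fun_prop)).continuousOn
  choose γ hγ using hlift
  have hcont : Continuous (fun q : unitInterval × A => γ q.2 q.1) := by
    refine h.isLocalHomeomorph.continuous_lift (T2Space.isSeparatedMap _) F (funext fun q => ?_)
      ?_ fun a => (hγ a).continuousOn.comp_continuous continuous_subtype_val Subtype.prop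
    · simpa using (hγ q.2).lifts q.1 q.1.2
    · exact (hg.subtype_mk fun a => (e a).2).congr fun a => (hγ a).map_zero.symm
  refine ⟨fun q => γ q.2 q.1, continuous_subtype_val.comp hcont,
    fun a => congrArg Subtype.val (hγ a).map_zero, fun q => ⟨(γ q.2 q.1).2.1, ?_⟩⟩
  simpa using (hγ q.2).lifts q.1 q.1.2

end IsRegularOver

end RegularValues

/-! ### Local analysis of holomorphic maps -/

section LocalAnalysis

theorem exists_analyticAt_pow_eq {g : ℂ → ℂ} {x : ℂ} (hg : AnalyticAt ℂ g x) (hgx : g x ≠ 0)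
    {d : ℕ} (hd : d ≠ 0) : ∃ k : ℂ → ℂ, AnalyticAt ℂ k x ∧ ∀ z, k z ^ d = g z := by
  obtain ⟨c, hc⟩ := IsAlgClosed.exists_pow_nat_eq (g x) (Nat.pos_of_ne_zero hd)
  refine ⟨fun z => c * (g z / g x) ^ (d⁻¹ : ℂ), analyticAt_const.mul ?_, fun z => ?_⟩
  · refine (hg.div analyticAt_const hgx).cpow analyticAt_const ?_
    simp [hgx]
  · rw [mul_pow, Complex.cpow_nat_inv_pow _ hd, hc, mul_div_cancel₀ _ hgx]

theorem exists_openPartialHomeomorph_eq_pow {g : ℂ → ℂ} {x : ℂ} (hg : AnalyticAt ℂ g x)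
    (hgx : g x = 0) (hg0 : ¬∀ᶠ z in 𝓝 x, g z = 0) :
    ∃ d ≠ 0, ∃ e : OpenPartialHomeomorph ℂ ℂ, x ∈ e.source ∧ e x = 0 ∧
      ∀ z ∈ e.source, g z = e z ^ d := by
  obtain ⟨d, G, hG, hGx, hgG⟩ := hg.exists_eventuallyEq_pow_smul_nonzero_iff.2 hg0
  have hd : d ≠ 0 := by
    rintro rfl
    exact hGx (by simpa [hgx] using hgG.self_of_nhds.symm)
  obtain ⟨k, hk, hkG⟩ := exists_analyticAt_pow_eq hG hGx hd
  have hkx : k x ≠ 0 := fun h => hGx (by rw [← hkG, h, zero_pow hd])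
  have hderiv : HasStrictDerivAt (fun z => (z - x) * k z) (k x) x := by
    simpa [Pi.mul_def] using
      HasStrictDerivAt.mul ((hasStrictDerivAt_id x).sub_const x) hk.hasStrictDerivAt
  have hequiv := hderiv.hasStrictFDerivAt_equiv hkx
  obtain ⟨s, hs, hso, hxs⟩ := _root_.eventually_nhds_iff.1 hgG
  refine ⟨d, hd, (hequiv.toOpenPartialHomeomorph _).restrOpen s hso,
    ⟨hequiv.mem_toOpenPartialHomeomorph_source, hxs⟩, ?_, fun z hz => ?_⟩
  · simp
  · simp [hs z hz.2, mul_pow, hkG]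

variable {f Φ q : ℂ → ℂ}

theorem differentiableAt_of_comp_eventuallyEq {ζ : ℂ} (hf : AnalyticAt ℂ f (Φ ζ))
    (hf' : deriv f (Φ ζ) ≠ 0) (hΦ : ContinuousAt Φ ζ) (hq : DifferentiableAt ℂ q ζ)
    (hfΦ : f ∘ Φ =ᶠ[𝓝 ζ] q) : DifferentiableAt ℂ Φ ζ := by
  have hstrict := hf.hasStrictDerivAt
  have hinv := (hstrict.to_localInverse hf').hasDerivAt.differentiableAt
  rw [show f (Φ ζ) = q ζ from hfΦ.self_of_nhds] at hinv
  refine (hinv.comp ζ hq).congr_of_eventuallyEq ?_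
  filter_upwards [hΦ.eventually (hstrict.eventually_left_inverse hf'), hfΦ] with ξ hleft hξ
  rw [Function.comp_apply, ← hξ]
  exact hleft.symm

theorem differentiableOn_of_comp_eqOn {S : Set ℂ} {c : ℂ} (hS : IsOpen S) (hc : c ∈ S)
    (hΦ : ContinuousOn Φ S) (hq : DifferentiableOn ℂ q S) (hfΦ : EqOn (f ∘ Φ) q S)
    (hf : ∀ ζ ∈ S \ {c}, AnalyticAt ℂ f (Φ ζ) ∧ deriv f (Φ ζ) ≠ 0) : DifferentiableOn ℂ Φ S := by
  refine (Complex.differentiableOn_compl_singleton_and_continuousAt_iff (hS.mem_nhds hc)).1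
    ⟨fun ζ hζ => ?_, hΦ.continuousAt (hS.mem_nhds hc)⟩
  have hζS := hS.mem_nhds hζ.1
  exact (differentiableAt_of_comp_eventuallyEq (hf ζ hζ).1 (hf ζ hζ).2 (hΦ.continuousAt hζS)
    (hq.differentiableAt hζS) (hfΦ.eventuallyEq_of_mem hζS)).differentiableWithinAt

end LocalAnalysis

/-! ### Components over the unit disk -/

section UnitDisk

theorem ofReal_mul_mem_ball_diff_zero {c r : ℝ} {ζ : ℂ} (hc : c ∈ Ioc 0 1)
    (hζ : ζ ∈ ball 0 r \ {0}) : (c : ℂ) * ζ ∈ ball 0 r \ {0} := by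
  refine ⟨balanced_ball_zero.smul_mem (a := (c : ℂ)) ?_ hζ.1,
    mul_ne_zero (Complex.ofReal_ne_zero.2 hc.1.ne') hζ.2⟩
  rw [Complex.norm_real, Real.norm_of_nonneg hc.1.le]
  exact hc.2

theorem pow_mem_ball_diff_zero {d : ℕ} {ζ : ℂ} (hd : d ≠ 0) (hζ : ζ ∈ ball 0 1 \ {0}) :
    ζ ^ d ∈ ball 0 1 \ {0} := by
  refine ⟨?_, pow_ne_zero d hζ.2⟩
  rw [mem_ball_zero_iff, norm_pow]
  exact pow_lt_one₀ (norm_nonneg ζ) (mem_ball_zero_iff.1 hζ.1) hd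

variable {f : ℂ → ℂ} {X : Set ℂ}

theorem IsRegularOver.exists_isPathLift_segment_to_zero (hreg : IsRegularOver f X (ball 0 1 \ {0}))
    (e : ↥(X ∩ f ⁻¹' (ball 0 1 \ {0}))) :
    ∃ γ, IsPathLift (fun z : ↥(X ∩ f ⁻¹' (ball 0 1 \ {0})) => f z)
      (fun t => ((1 - t : ℝ) : ℂ) * f e) e (Ico 0 1) γ := by
  refine exists_isPathLift_Ico_of_forall_Icc hreg.isLocalHomeomorph one_pos fun s hs => ?_
  refine hreg.exists_isPathLift hs.1 (by fun_prop) (fun t ht => ?_) e (by simp)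
  exact ofReal_mul_mem_ball_diff_zero ⟨by linarith [ht.2, hs.2], by linarith [ht.1]⟩ e.2.2

theorem IsRegularOver.exists_zero_mem_connectedComponentIn
    (hreg : IsRegularOver f X (ball 0 1 \ {0})) (h0 : ¬IsAsympVal f X 0) {x₀ : ℂ}
    (hx₀ : x₀ ∈ X ∩ f ⁻¹' ball 0 1) :
    ∃ x ∈ connectedComponentIn (X ∩ f ⁻¹' ball 0 1) x₀, f x = 0 := by
  by_cases hfx₀ : f x₀ = 0
  · exact ⟨x₀, mem_connectedComponentIn hx₀, hfx₀⟩
  obtain ⟨γ, hγ⟩ := hreg.exists_isPathLift_segment_to_zero ⟨x₀, hx₀.1, hx₀.2, hfx₀⟩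
  have hγc : ContinuousOn (Subtype.val ∘ γ) (Ico 0 1) :=
    continuous_subtype_val.comp_continuousOn hγ.continuousOn
  have hγP : MapsTo (Subtype.val ∘ γ) (Ico 0 1) (X ∩ f ⁻¹' ball 0 1) := fun t _ =>
    ⟨(γ t).2.1, (γ t).2.2.1⟩
  have hlim : Tendsto (f ∘ (Subtype.val ∘ γ)) (𝓝[<] 1) (𝓝 0) := by
    have hsegment : Tendsto (fun t : ℝ => ((1 - t : ℝ) : ℂ) * f x₀) (𝓝[<] 1) (𝓝 0) :=
      (Continuous.tendsto' (by fun_prop) 1 0 (by simp)).mono_left nhdsWithin_le_nhds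
    refine hsegment.congr' ?_
    filter_upwards [Ico_mem_nhdsLT one_pos] with t ht using (hγ.lifts t ht).symm
  obtain ⟨x, hxX, hfx, hx⟩ := exists_mapClusterPt_of_not_isAsympVal
    hreg.differentiableOn.continuousOn hreg.isOpen_domain h0 one_pos hγc
    (fun t ht => (hγP ht).1) hlim
  have hxP : x ∈ X ∩ f ⁻¹' ball 0 1 := ⟨hxX, by simp [hfx]⟩
  have hmem := mem_connectedComponentIn_of_mapClusterPt one_pos hγc hγP hxP hx
  rw [Function.comp_apply, hγ.map_zero] at hmem
  exact ⟨x, hmem, hfx⟩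

/-- `Φ` is a continuous map from the disk of radius `δ` to `X` which turns `f` into `ζ ↦ ζ ^ d`.
Its inverse is the chart `φ` of `IsBranchedCovering`; injectivity is kept as a separate condition,
as it has to be propagated from a small disk to the unit disk. -/
structure IsPowerParam (f : ℂ → ℂ) (X : Set ℂ) (d : ℕ) (δ : ℝ) (Φ : ℂ → ℂ) : Prop where
  continuousOn : ContinuousOn Φ (ball 0 δ)
  mapsTo : MapsTo Φ (ball 0 δ) X
  eq_pow : ∀ ζ ∈ ball 0 δ, f (Φ ζ) = ζ ^ d

theorem exists_isPowerParam_injOn (hX : IsOpen X) (hf : DifferentiableOn ℂ f X)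
    (hN : NowhereConstantOn f X) {x : ℂ} (hx : x ∈ X) (hfx : f x = 0) :
    ∃ d ≠ 0, ∃ δ ∈ Ioc (0 : ℝ) 1, ∃ Φ, IsPowerParam f X d δ Φ ∧ InjOn Φ (ball 0 δ) ∧ Φ 0 = x := by
  have hne : ¬∀ᶠ z in 𝓝 x, f z = 0 := by
    intro h
    obtain ⟨U, hU, hUo, hxU⟩ := _root_.eventually_nhds_iff.1 (h.and (hX.mem_nhds hx))
    exact hN U hUo ⟨x, hxU⟩ (fun z hz => (hU z hz).2) ⟨0, fun z hz => (hU z hz).1⟩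
  obtain ⟨d, hd, e, hxe, hex, hfe⟩ :=
    exists_openPartialHomeomorph_eq_pow (hf.analyticAt (hX.mem_nhds hx)) hfx hne
  have h0 : 0 ∈ e.target := hex ▸ e.map_source hxe
  have hsymm : e.symm 0 = x := by rw [← hex, e.left_inv hxe]
  have hXe : ∀ᶠ ζ in 𝓝 0, ζ ∈ e.target ∧ e.symm ζ ∈ X :=
    (e.open_target.eventually_mem h0).and
      ((e.symm.continuousAt h0).eventually (hX.mem_nhds (by rwa [hsymm])))
  obtain ⟨δ, hδ, hδe⟩ := eventually_nhds_iff_ball.1 hXe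
  have hball : ball (0 : ℂ) (min δ 1) ⊆ ball 0 δ := ball_subset_ball (min_le_left _ _)
  refine ⟨d, hd, min δ 1, ⟨lt_min hδ one_pos, min_le_right _ _⟩, e.symm, ⟨?_, ?_, ?_⟩, ?_, hsymm⟩
  · exact e.continuousOn_symm.mono fun ζ hζ => (hδe ζ (hball hζ)).1
  · exact fun ζ hζ => (hδe ζ (hball hζ)).2
  · intro ζ hζ
    have hζe := (hδe ζ (hball hζ)).1
    rw [hfe _ (e.map_target hζe), e.right_inv hζe]
  · exact e.symm.injOn.mono fun ζ hζ => (hδe ζ (hball hζ)).1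

namespace IsPowerParam

variable {d : ℕ} {δ : ℝ} {Φ : ℂ → ℂ}

theorem mapsTo_inter_preimage (h : IsPowerParam f X d 1 Φ) (hd : d ≠ 0) :
    MapsTo Φ (ball 0 1 \ {0}) (X ∩ f ⁻¹' (ball 0 1 \ {0})) := fun ζ hζ =>
  ⟨h.mapsTo hζ.1, mem_preimage.2 (h.eq_pow ζ hζ.1 ▸ pow_mem_ball_diff_zero hd hζ)⟩

theorem exists_radial_lift (hreg : IsRegularOver f X (ball 0 1 \ {0})) (hd : d ≠ 0)
    (hδ : δ ∈ Ioc 0 1) (h : IsPowerParam f X d δ Φ) :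
    ∃ Ψ : ↥(ball 0 1 \ {0} : Set ℂ) → ℂ, Continuous Ψ ∧ (∀ a, Ψ a ∈ X ∧ f (Ψ a) = a.1 ^ d) ∧
      ∀ a, a.1 ∈ ball 0 δ → Ψ a = Φ a := by
  have hδ0 : 0 < δ := hδ.1
  have hδ1 : δ ≤ 1 := hδ.2
  let c : unitInterval → ℝ := fun t => δ / 2 * (1 - t) + t
  have hc : ∀ t, c t ∈ Ioc 0 1 := fun t => by
    have ht0 := t.2.1
    have ht1 := t.2.2
    constructor <;> simp only [c] <;> nlinarith
  let F : C(unitInterval × ↥(ball 0 1 \ {0} : Set ℂ), ℂ) :=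
    ⟨fun q => (c q.1 * (q.2 : ℂ)) ^ d, by fun_prop⟩
  have hstart : ∀ a : ↥(ball 0 1 \ {0} : Set ℂ), (c 0 : ℂ) * a ∈ ball 0 δ := fun a => by
    have ha := mem_ball_zero_iff.1 a.2.1
    rw [mem_ball_zero_iff, norm_mul, Complex.norm_real, Real.norm_of_nonneg (hc 0).1.le]
    simp only [c, Icc.coe_zero]
    nlinarith
  obtain ⟨G, hG, hG0, hGF⟩ := hreg.exists_homotopy_lift F
    (fun q => pow_mem_ball_diff_zero hd (ofReal_mul_mem_ball_diff_zero (hc q.1) q.2.2))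
    (g := fun a => Φ (c 0 * a)) (h.continuousOn.comp_continuous (by fun_prop) hstart)
    (fun a => h.mapsTo (hstart a)) (fun a => h.eq_pow _ (hstart a))
  have hc1 : (c 1 : ℂ) = 1 := by simp [c]
  refine ⟨fun a => G (1, a), by fun_prop, fun a => ⟨(hGF _).1, ?_⟩, fun a ha => ?_⟩
  · rw [(hGF _).2, ContinuousMap.coe_mk, hc1, one_mul]
  have hball : ∀ t, (c t : ℂ) * a ∈ ball 0 δ := fun t =>
    (ofReal_mul_mem_ball_diff_zero (hc t) ⟨ha, a.2.2⟩).1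
  have heq : EqOn (fun t => G (t, a)) (fun t => Φ (c t * a)) univ := by
    refine hreg.eqOn_of_comp_eqOn isPreconnected_univ (by fun_prop)
      (h.continuousOn.comp (by fun_prop) fun t _ => hball t) (fun t _ => ⟨(hGF _).1, ?_⟩)
      (fun t _ => h.mapsTo (hball t)) (fun t _ => ?_) (mem_univ 0) (hG0 a)
    · rw [mem_preimage, (hGF _).2]
      exact pow_mem_ball_diff_zero hd (ofReal_mul_mem_ball_diff_zero (hc t) a.2)
    · exact (hGF _).2.trans (h.eq_pow _ (hball t)).symm
  simpa only [hc1, one_mul] using heq (mem_univ 1)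

theorem exists_extension (hreg : IsRegularOver f X (ball 0 1 \ {0})) (hd : d ≠ 0)
    (hδ : δ ∈ Ioc 0 1) (h : IsPowerParam f X d δ Φ) :
    ∃ Ψ, IsPowerParam f X d 1 Ψ ∧ EqOn Ψ Φ (ball 0 δ) := by
  classical
  obtain ⟨Ψ₀, hΨ₀, hfΨ₀, hΨ₀Φ⟩ := h.exists_radial_lift hreg hd hδ
  have h0 : (0 : ℂ) ∈ ball 0 δ := mem_ball_self hδ.1
  let Ψ : ℂ → ℂ := fun ζ => if hζ : ζ ∈ ball 0 1 \ {0} then Ψ₀ ⟨ζ, hζ⟩ else Φ 0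
  have hΨ : ∀ a : ↥(ball 0 1 \ {0} : Set ℂ), Ψ a = Ψ₀ a := fun a => dif_pos a.2
  have hΨ0 : Ψ 0 = Φ 0 := dif_neg fun h => h.2 rfl
  have heq : EqOn Ψ Φ (ball 0 δ) := by
    intro ζ hζ
    rcases eq_or_ne ζ 0 with rfl | hζ0
    · exact hΨ0
    · have hζ1 : ζ ∈ ball 0 1 \ {0} := ⟨ball_subset_ball hδ.2 hζ, hζ0⟩
      exact (hΨ ⟨ζ, hζ1⟩).trans (hΨ₀Φ ⟨ζ, hζ1⟩ hζ)
  have hcont : ContinuousOn Ψ (ball 0 1 \ {0}) :=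
    continuousOn_iff_continuous_domRestrict.2 (hΨ₀.congr fun a => (hΨ a).symm)
  have hfΨ : ∀ ζ ∈ ball (0 : ℂ) 1, Ψ ζ ∈ X ∧ f (Ψ ζ) = ζ ^ d := by
    intro ζ hζ
    rcases eq_or_ne ζ 0 with rfl | hζ0
    · rw [hΨ0]
      exact ⟨h.mapsTo h0, h.eq_pow 0 h0⟩
    · have hζ1 : ζ ∈ ball 0 1 \ {0} := ⟨hζ, hζ0⟩
      exact hΨ ⟨ζ, hζ1⟩ ▸ hfΨ₀ ⟨ζ, hζ1⟩
  refine ⟨Ψ, ⟨fun ζ hζ => ContinuousAt.continuousWithinAt ?_, fun ζ hζ => (hfΨ ζ hζ).1,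
    fun ζ hζ => (hfΨ ζ hζ).2⟩, heq⟩
  rcases eq_or_ne ζ 0 with rfl | hζ0
  · have hδ0 := isOpen_ball.mem_nhds h0
    exact (h.continuousOn.continuousAt hδ0).congr (heq.eventuallyEq_of_mem hδ0).symm
  · exact hcont.continuousAt ((isOpen_ball.sdiff isClosed_singleton).mem_nhds ⟨hζ, hζ0⟩)

theorem injOn (hreg : IsRegularOver f X (ball 0 1 \ {0})) (hd : d ≠ 0) (hδ : δ ∈ Ioc 0 1)
    (h : IsPowerParam f X d 1 Φ) (hinj : InjOn Φ (ball 0 δ)) : InjOn Φ (ball 0 1) := by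
  intro a ha b hb hab
  have hpow : a ^ d = b ^ d := by rw [← h.eq_pow a ha, ← h.eq_pow b hb, hab]
  by_cases ha0 : a = 0
  · rw [ha0, zero_pow hd] at hpow
    rw [ha0, eq_zero_of_pow_eq_zero hpow.symm]
  have hb0 : b ≠ 0 := fun hb0 => ha0 (eq_zero_of_pow_eq_zero (by rw [hpow, hb0, zero_pow hd]))
  have hmul : ∀ ζ ∈ ball (0 : ℂ) 1 \ {0}, MapsTo (fun t : ℝ => (t : ℂ) * ζ) (Ioc 0 1)
      (ball 0 1 \ {0}) := fun ζ hζ t ht => ofReal_mul_mem_ball_diff_zero ht hζ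
  have hcont : ∀ ζ ∈ ball (0 : ℂ) 1 \ {0}, ContinuousOn (fun t : ℝ => Φ (t * ζ)) (Ioc 0 1) :=
    fun ζ hζ => h.continuousOn.comp (by fun_prop) fun t ht => (hmul ζ hζ ht).1
  have hray : EqOn (fun t : ℝ => Φ (t * a)) (fun t => Φ (t * b)) (Ioc 0 1) := by
    refine hreg.eqOn_of_comp_eqOn isPreconnected_Ioc (hcont a ⟨ha, ha0⟩) (hcont b ⟨hb, hb0⟩)
      (fun t ht => h.mapsTo_inter_preimage hd (hmul a ⟨ha, ha0⟩ ht))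
      (fun t ht => h.mapsTo (hmul b ⟨hb, hb0⟩ ht).1) (fun t ht => ?_) ⟨one_pos, le_rfl⟩
      (by simpa using hab)
    simp only [Function.comp_apply, h.eq_pow _ (hmul a ⟨ha, ha0⟩ ht).1,
      h.eq_pow _ (hmul b ⟨hb, hb0⟩ ht).1, mul_pow, hpow]
  have hδ0 : 0 < δ / 2 := half_pos hδ.1
  have hsmall : ∀ ζ ∈ ball (0 : ℂ) 1, ((δ / 2 : ℝ) : ℂ) * ζ ∈ ball 0 δ := fun ζ hζ => by
    have hζ1 := mem_ball_zero_iff.1 hζ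
    rw [mem_ball_zero_iff, norm_mul, Complex.norm_real, Real.norm_of_nonneg hδ0.le]
    nlinarith
  exact mul_left_cancel₀ (Complex.ofReal_ne_zero.2 hδ0.ne')
    (hinj (hsmall a ha) (hsmall b hb) (hray ⟨hδ0, by linarith [hδ.2]⟩))

theorem differentiableOn (hreg : IsRegularOver f X (ball 0 1 \ {0})) (hd : d ≠ 0)
    (h : IsPowerParam f X d 1 Φ) : DifferentiableOn ℂ Φ (ball 0 1) := by
  refine differentiableOn_of_comp_eqOn isOpen_ball (mem_ball_self one_pos) h.continuousOn
    (differentiable_pow d).differentiableOn h.eq_pow fun ζ hζ => ?_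
  obtain ⟨hX, hD⟩ := h.mapsTo_inter_preimage hd hζ
  exact ⟨hreg.differentiableOn.analyticAt (hreg.isOpen_domain.mem_nhds hX),
    hreg.deriv_ne_zero _ hX hD⟩

theorem isOpen_image (hreg : IsRegularOver f X (ball 0 1 \ {0})) (hd : d ≠ 0)
    (h : IsPowerParam f X d 1 Φ) {s : Set ℂ} (hs : s ⊆ ball 0 1) (hso : IsOpen s) :
    IsOpen (Φ '' s) := by
  refine ((h.differentiableOn hreg hd).analyticOnNhd isOpen_ball).is_constant_or_isOpen
    (convex_ball 0 1).isPreconnected |>.resolve_left ?_ s hs hso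
  rintro ⟨w, hw⟩
  have h0 : (0 : ℂ) ∈ ball 0 1 := mem_ball_self one_pos
  have hhalf : (1 / 2 : ℂ) ∈ ball 0 1 := by norm_num
  have : (1 / 2 : ℂ) ^ d = 0 := by
    rw [← h.eq_pow _ hhalf, hw _ hhalf, ← hw 0 h0, h.eq_pow 0 h0, zero_pow hd]
  exact pow_ne_zero d (by norm_num) this

theorem closure_image_inter_preimage_subset (hf : ContinuousOn f X) (hX : IsOpen X)
    (h : IsPowerParam f X d 1 Φ) :
    closure (Φ '' ball 0 1) ∩ (X ∩ f ⁻¹' ball 0 1) ⊆ Φ '' ball 0 1 := by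
  rintro z ⟨hz, hzX, hfz⟩
  obtain ⟨ρ, hρ, hρ0, hρ1⟩ : ∃ ρ, ‖f z‖ < ρ ^ d ∧ ρ ∈ Ioo 0 1 := by
    have hlim : Tendsto (fun ρ : ℝ => ρ ^ d) (𝓝[<] 1) (𝓝 1) :=
      ((continuous_pow d).tendsto' 1 1 (one_pow d)).mono_left nhdsWithin_le_nhds
    exact ((hlim.eventually_const_lt (mem_ball_zero_iff.1 hfz)).and (Ioo_mem_nhdsLT one_pos)).exists
  have hnear : X ∩ f ⁻¹' ball 0 (ρ ^ d) ∩ Φ '' ball 0 1 ⊆ Φ '' closedBall 0 ρ := by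
    rintro _ ⟨⟨-, hw⟩, ζ, hζ, rfl⟩
    rw [mem_preimage, h.eq_pow ζ hζ, mem_ball_zero_iff, norm_pow] at hw
    exact mem_image_of_mem Φ (mem_closedBall_zero_iff.2 (lt_of_pow_lt_pow_left₀ d hρ0.le hw).le)
  have hcompact : IsCompact (Φ '' closedBall 0 ρ) :=
    (isCompact_closedBall 0 ρ).image_of_continuousOn
      (h.continuousOn.mono (closedBall_subset_ball hρ1))
  have hz' : z ∈ closure (X ∩ f ⁻¹' ball 0 (ρ ^ d) ∩ Φ '' ball 0 1) :=
    (hf.isOpen_inter_preimage hX isOpen_ball).inter_closure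
      ⟨⟨hzX, mem_ball_zero_iff.2 hρ⟩, hz⟩
  exact image_mono (closedBall_subset_ball hρ1) (closure_minimal hnear hcompact.isClosed hz')

theorem image_ball_eq_connectedComponentIn (hreg : IsRegularOver f X (ball 0 1 \ {0}))
    (hd : d ≠ 0) (h : IsPowerParam f X d 1 Φ) :
    Φ '' ball 0 1 = connectedComponentIn (X ∩ f ⁻¹' ball 0 1) (Φ 0) := by
  have hmaps : Φ '' ball 0 1 ⊆ X ∩ f ⁻¹' ball 0 1 := by
    rintro _ ⟨ζ, hζ, rfl⟩
    refine ⟨h.mapsTo hζ, ?_⟩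
    rw [mem_preimage, h.eq_pow ζ hζ, mem_ball_zero_iff, norm_pow]
    exact pow_lt_one₀ (norm_nonneg ζ) (mem_ball_zero_iff.1 hζ) hd
  have h0 : Φ 0 ∈ Φ '' ball 0 1 := mem_image_of_mem Φ (mem_ball_self one_pos)
  refine Subset.antisymm ?_ ?_
  · exact ((convex_ball 0 1).isPreconnected.image Φ h.continuousOn).subset_connectedComponentIn
      h0 hmaps
  · refine isPreconnected_connectedComponentIn.subset_of_closure_inter_subset
      (h.isOpen_image hreg hd subset_rfl isOpen_ball)
      ⟨Φ 0, mem_connectedComponentIn (hmaps h0), h0⟩ ?_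
    exact (inter_subset_inter_right _ (connectedComponentIn_subset _ _)).trans
      (h.closure_image_inter_preimage_subset hreg.differentiableOn.continuousOn
        hreg.isOpen_domain)

theorem biholo_invFunOn (hreg : IsRegularOver f X (ball 0 1 \ {0})) (hd : d ≠ 0)
    (h : IsPowerParam f X d 1 Φ) (hinj : InjOn Φ (ball 0 1)) :
    Biholo (Function.invFunOn Φ (ball 0 1)) (Φ '' ball 0 1) (ball 0 1) := by
  have h0 : (0 : ℂ) ∈ ball 0 1 := mem_ball_self one_pos
  have hinv : InvOn (Function.invFunOn Φ (ball 0 1)) Φ (ball 0 1) (Φ '' ball 0 1) :=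
    hinj.bijOn_image.invOn_invFunOn
  have hmaps : MapsTo (Function.invFunOn Φ (ball 0 1)) (Φ '' ball 0 1) (ball 0 1) :=
    (hinj.bijOn_image.symm hinv.symm).mapsTo
  have hopen : IsOpenMap ((ball 0 1).domRestrict Φ) := fun s hs => by
    rw [domRestrict_eq, image_comp]
    exact h.isOpen_image hreg hd (Subtype.coe_image_subset _ _)
      (isOpen_ball.isOpenMap_subtype_val s hs)
  refine ⟨?_, hinj.bijOn_image.symm hinv.symm, Φ, h.differentiableOn hreg hd, hinv.symm⟩
  refine differentiableOn_of_comp_eqOn (f := (· ^ d)) (q := f)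
    (h.isOpen_image hreg hd subset_rfl isOpen_ball) (mem_image_of_mem Φ h0)
    (hopen.continuousOn_image_of_leftInvOn hinv.1)
    (hreg.differentiableOn.mono h.mapsTo.image_subset) ?_ ?_
  · intro z hz
    simp only [Function.comp_apply]
    rw [← h.eq_pow _ (hmaps hz), hinv.2 hz]
  · intro z hz
    refine ⟨analyticAt_id.pow d, ?_⟩
    have hz0 : Function.invFunOn Φ (ball 0 1) z ≠ 0 := fun hz0 =>
      hz.2 (by rw [mem_singleton_iff, ← hinv.2 hz.1, hz0])
    simp [hd, hz0]

end IsPowerParam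

theorem IsRegularOver.exists_biholo_connectedComponentIn
    (hreg : IsRegularOver f X (ball 0 1 \ {0})) (h0 : ¬IsAsympVal f X 0)
    (hN : NowhereConstantOn f X) {x₀ : ℂ} (hx₀ : x₀ ∈ X ∩ f ⁻¹' ball 0 1) :
    ∃ d ≠ 0, ∃ φ, Biholo φ (connectedComponentIn (X ∩ f ⁻¹' ball 0 1) x₀) (ball 0 1) ∧
      ∀ z ∈ connectedComponentIn (X ∩ f ⁻¹' ball 0 1) x₀, f z = φ z ^ d := by
  obtain ⟨x, hx, hfx⟩ := hreg.exists_zero_mem_connectedComponentIn h0 hx₀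
  obtain ⟨d, hd, δ, hδ, Φ₀, hΦ₀, hinj₀, hΦ₀x⟩ := exists_isPowerParam_injOn hreg.isOpen_domain
    hreg.differentiableOn hN (connectedComponentIn_subset _ _ hx).1 hfx
  obtain ⟨Φ, hΦ, heq⟩ := hΦ₀.exists_extension hreg hd hδ
  have hinj : InjOn Φ (ball 0 1) := hΦ.injOn hreg hd hδ (hinj₀.congr heq.symm)
  have himage : Φ '' ball 0 1 = connectedComponentIn (X ∩ f ⁻¹' ball 0 1) x₀ := by
    rw [hΦ.image_ball_eq_connectedComponentIn hreg hd, heq (mem_ball_self hδ.1), hΦ₀x,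
      connectedComponentIn_eq hx]
  rw [← himage]
  refine ⟨d, hd, _, hΦ.biholo_invFunOn hreg hd hinj, ?_⟩
  rintro _ ⟨ζ, hζ, rfl⟩
  rw [hinj.leftInvOn_invFunOn hζ, hΦ.eq_pow ζ hζ]

end UnitDisk

/-! ### Branched coverings -/

section BranchedCovering

variable {f : ℂ → ℂ} {X Y : Set ℂ}

theorem sub_div_mem_ball_iff {w y : ℂ} {r : ℝ} (hr : 0 < r) :
    (w - y) / r ∈ ball (0 : ℂ) 1 ↔ w ∈ ball y r := by
  rw [mem_ball_zero_iff, norm_div, Complex.norm_real, Real.norm_of_nonneg hr.le, div_lt_one hr,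
    mem_ball_iff_norm]

theorem biholo_sub_div (y : ℂ) {r : ℝ} (hr : 0 < r) :
    Biholo (fun z => (z - y) / r) (ball y r) (ball 0 1) := by
  have hr0 : (r : ℂ) ≠ 0 := Complex.ofReal_ne_zero.2 hr.ne'
  have hinv : InvOn (fun ζ => y + r * ζ) (fun z => (z - y) / r) (ball y r) (ball 0 1) :=
    ⟨fun z _ => by field_simp; ring, fun ζ _ => by field_simp; ring⟩
  have hmaps : MapsTo (fun z => (z - y) / r) (ball y r) (ball 0 1) := fun _ =>
    (sub_div_mem_ball_iff hr).2
  have hmaps' : MapsTo (fun ζ => y + r * ζ) (ball 0 1) (ball y r) := fun ζ hζ =>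
    (sub_div_mem_ball_iff hr).1 (mem_of_eq_of_mem (hinv.2 hζ) hζ)
  exact ⟨by fun_prop, hinv.bijOn hmaps hmaps', _, by fun_prop, hinv⟩

theorem IsAsympVal.comp {u : ℂ → ℂ} {c : ℂ} (h : IsAsympVal f X c) (hu : ContinuousAt u c) :
    IsAsympVal (u ∘ f) X (u c) := by
  obtain ⟨γ, hγ, hγX, hleave, hlim⟩ := h
  exact ⟨γ, hγ, hγX, hleave, hu.tendsto.comp hlim⟩

theorem NowhereConstantOn.sub_div (h : NowhereConstantOn f X) (y : ℂ) {r : ℂ} (hr : r ≠ 0) :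
    NowhereConstantOn (fun z => (f z - y) / r) X := by
  rintro U hU hne hUX ⟨c, hc⟩
  exact h U hU hne hUX ⟨y + r * c, fun z hz => by rw [← hc z hz]; field_simp; ring⟩

theorem not_isAsympVal_sub_div {y c r : ℂ} (hr : r ≠ 0) (h : ¬IsAsympVal f X (y + r * c)) :
    ¬IsAsympVal (fun z => (f z - y) / r) X c := by
  intro hc
  have hcomp : (fun ζ => y + r * ζ) ∘ (fun z => (f z - y) / r) = f := by
    funext z
    simp only [Function.comp_apply]
    field_simp
    ring
  exact h (hcomp ▸ hc.comp (u := fun ζ => y + r * ζ) (by fun_prop))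

theorem isRegularOver_sub_div (hX : IsOpen X) (hf : DifferentiableOn ℂ f X) {y : ℂ} {r : ℝ}
    (hr : 0 < r) (hcrit : ∀ z ∈ X, f z ∈ ball y r \ {y} → deriv f z ≠ 0)
    (hasymp : ∀ w ∈ ball y r \ {y}, ¬IsAsympVal f X w) :
    IsRegularOver (fun z => (f z - y) / r) X (ball 0 1 \ {0}) := by
  have hr0 : (r : ℂ) ≠ 0 := Complex.ofReal_ne_zero.2 hr.ne'
  refine ⟨hX, isOpen_ball.sdiff isClosed_singleton, by fun_prop, fun z hz hfz => ?_,
    fun c hc => not_isAsympVal_sub_div hr0 (hasymp _ ⟨?_, ?_⟩)⟩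
  · rw [deriv_div_const, deriv_sub_const]
    refine div_ne_zero (hcrit z hz ⟨(sub_div_mem_ball_iff hr).1 hfz.1, fun hfy => hfz.2 ?_⟩) hr0
    simp [mem_singleton_iff.1 hfy]
  · rw [← sub_div_mem_ball_iff hr, add_sub_cancel_left, mul_div_cancel_left₀ _ hr0]
    exact hc.1
  · simpa [hr.ne'] using hc.2

theorem exists_ball_subset_of_not_accPt {M : Type*} [PseudoMetricSpace M] {S C : Set M} {y : M}
    (hS : S ∈ 𝓝 y) (hC : ¬AccPt y (𝓟 C)) : ∃ r > 0, ball y r ⊆ S ∧ ∀ w ∈ ball y r \ {y}, w ∉ C := by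
  rw [accPt_iff_frequently, not_frequently] at hC
  obtain ⟨r, hr, hball⟩ := eventually_nhds_iff_ball.1 (hC.and hS)
  exact ⟨r, hr, fun w hw => (hball w hw).2, fun w hw hwC => (hball w hw.1).1 ⟨hw.2, hwC⟩⟩

theorem isBranchedCovering_of_nowhereConstantOn (hX : IsOpen X) (hY : IsOpen Y)
    (hf : DifferentiableOn ℂ f X) (hN : NowhereConstantOn f X)
    (hA : ∀ y ∈ Y, ¬IsAsympVal f X y)
    (hC : ∀ y ∈ Y, ¬AccPt y (𝓟 (f '' {z ∈ X | deriv f z = 0}))) : IsBranchedCovering f X Y := by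
  intro y hy
  obtain ⟨r, hr, hrY, hrC⟩ := exists_ball_subset_of_not_accPt (hY.mem_nhds hy) (hC y hy)
  have hr0 : (r : ℂ) ≠ 0 := Complex.ofReal_ne_zero.2 hr.ne'
  have hreg : IsRegularOver (fun z => (f z - y) / r) X (ball 0 1 \ {0}) :=
    isRegularOver_sub_div hX hf hr (fun z hz hfz hz' => hrC _ hfz ⟨z, ⟨hz, hz'⟩, rfl⟩)
      fun w hw => hA w (hrY hw.1)
  have hasymp : ¬IsAsympVal (fun z => (f z - y) / r) X 0 :=
    not_isAsympVal_sub_div hr0 (by simpa using hA y hy)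
  have hpre : {z ∈ X | f z ∈ ball y r} = X ∩ (fun z => (f z - y) / r) ⁻¹' ball 0 1 :=
    Set.ext fun z => and_congr_right fun _ => (sub_div_mem_ball_iff hr).symm
  refine ⟨ball y r, isOpen_ball, mem_ball_self hr, hrY, _, biholo_sub_div y hr, by simp, ?_⟩
  rintro _ ⟨x, hx, rfl⟩
  rw [hpre] at hx ⊢
  obtain ⟨d, hd, φ, hφ, hfφ⟩ := hreg.exists_biholo_connectedComponentIn hasymp (hN.sub_div y hr0) hx
  exact ⟨d, Nat.one_le_iff_ne_zero.2 hd, φ, hφ, hfφ⟩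

theorem Biholo.deriv_ne_zero {φ : ℂ → ℂ} {U V : Set ℂ} {z : ℂ} (h : Biholo φ U V) (hU : IsOpen U)
    (hV : IsOpen V) (hz : z ∈ U) : deriv φ z ≠ 0 := by
  obtain ⟨hφ, hbij, φ', hφ', hinv⟩ := h
  have hcomp : HasDerivAt (φ' ∘ φ) (deriv φ' (φ z) * deriv φ z) z :=
    (hφ'.differentiableAt (hV.mem_nhds (hbij.mapsTo hz))).hasDerivAt.comp z
      (hφ.differentiableAt (hU.mem_nhds hz)).hasDerivAt
  have hid : φ' ∘ φ =ᶠ[𝓝 z] id := hinv.1.eqOn.eventuallyEq_of_mem (hU.mem_nhds hz)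
  have hmul : deriv φ' (φ z) * deriv φ z = 1 := by rw [← hcomp.deriv, hid.deriv_eq, deriv_id]
  exact right_ne_zero_of_mul_eq_one hmul

theorem isOpen_connectedComponentIn_preimage (hX : IsOpen X) (hf : ContinuousOn f X) {V : Set ℂ}
    (hV : IsOpen V) (x : ℂ) : IsOpen (connectedComponentIn {z ∈ X | f z ∈ V} x) :=
  (hf.isOpen_inter_preimage hX hV).connectedComponentIn

namespace IsBranchedCovering

variable (h : IsBranchedCovering f X Y)

include h

theorem nowhereConstantOn (hX : IsOpen X) (hf : ContinuousOn f X) (hXY : MapsTo f X Y) :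
    NowhereConstantOn f X := by
  rintro U hU ⟨x, hx⟩ hUX ⟨c, hc⟩
  obtain ⟨V, hV, hxV, -, ψ, -, hψ, hcomp⟩ := h (f x) (hXY (hUX hx))
  have hxP : x ∈ {z ∈ X | f z ∈ V} := ⟨hUX hx, hxV⟩
  obtain ⟨d, -, φ, hφ, hfφ⟩ := hcomp _ ⟨x, hxP, rfl⟩
  have hC := isOpen_connectedComponentIn_preimage hX hf hV x
  have hxC := mem_connectedComponentIn hxP
  have hzero : φ =ᶠ[𝓝 x] fun _ => 0 := by
    filter_upwards [hC.mem_nhds hxC, hU.mem_nhds hx] with z hzC hzU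
    refine eq_zero_of_pow_eq_zero (n := d) ?_
    rw [← hfφ z hzC, hc z hzU, ← hc x hx, hψ]
  exact hφ.deriv_ne_zero hC isOpen_ball hxC (by rw [hzero.deriv_eq, deriv_const])

theorem not_isAsympVal {y : ℂ} (hy : y ∈ Y) : ¬IsAsympVal f X y := by
  rintro ⟨γ, hγ, hγX, hleave, hlim⟩
  rw [nhdsWithin_Ico_eq_nhdsLT one_pos] at hlim
  obtain ⟨V, hV, hyV, -, ψ, hψ, hψy, hcomp⟩ := h y hy
  have hP : ∀ᶠ t in 𝓝[<] 1, γ t ∈ {z ∈ X | f z ∈ V} := by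
    filter_upwards [Ico_mem_nhdsLT one_pos, hlim.eventually (hV.mem_nhds hyV)] with t ht htV
      using ⟨hγX t ht, htV⟩
  obtain ⟨x, hx, hγC⟩ := eventually_mem_connectedComponentIn one_pos hγ hP
  obtain ⟨d, -, φ, ⟨-, hbij, φ', hφ', hinv⟩, hfφ⟩ := hcomp _ ⟨x, hx, rfl⟩
  have hsub : closedBall (0 : ℂ) (1 / 2) ⊆ ball 0 1 := closedBall_subset_ball (by norm_num)
  have hK : IsCompact (φ' '' closedBall 0 (1 / 2)) :=
    (isCompact_closedBall 0 _).image_of_continuousOn (hφ'.continuousOn.mono hsub)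
  have hKX : φ' '' closedBall 0 (1 / 2) ⊆ X := image_subset_iff.2 fun ζ hζ =>
    (connectedComponentIn_subset _ _ ((hbij.symm hinv.symm).mapsTo (hsub hζ))).1
  obtain ⟨t₀, ht₀, hγK⟩ := hleave _ hKX hK
  have hψlim : Tendsto (fun t => ψ (f (γ t))) (𝓝[<] 1) (𝓝 0) :=
    hψy ▸ (hψ.1.continuousOn.continuousAt (hV.mem_nhds hyV)).tendsto.comp hlim
  have hsmall := hψlim.eventually (ball_mem_nhds 0 (show (0 : ℝ) < (1 / 2) ^ d by positivity))
  obtain ⟨t, ⟨htC, htψ⟩, ht⟩ := ((hγC.and hsmall).and (Ico_mem_nhdsLT ht₀.2)).exists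
  refine hγK t ht.1 ht.2 ⟨φ (γ t), mem_closedBall_zero_iff.2 ?_, hinv.1 htC⟩
  rw [hfφ _ htC, dist_zero_right, norm_pow] at htψ
  exact (lt_of_pow_lt_pow_left₀ d (by norm_num) htψ).le

theorem not_accPt_criticalValues (hX : IsOpen X) (hf : DifferentiableOn ℂ f X) {y : ℂ}
    (hy : y ∈ Y) : ¬AccPt y (𝓟 (f '' {z ∈ X | deriv f z = 0})) := by
  intro hacc
  obtain ⟨V, hV, hyV, -, ψ, hψ, hψy, hcomp⟩ := h y hy
  obtain ⟨_, ⟨hne, z, ⟨hzX, hz⟩, rfl⟩, hzV⟩ :=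
    ((accPt_iff_frequently.1 hacc).and_eventually (hV.mem_nhds hyV)).exists
  have hzP : z ∈ {z ∈ X | f z ∈ V} := ⟨hzX, hzV⟩
  obtain ⟨d, hd, φ, hφ, hfφ⟩ := hcomp _ ⟨z, hzP, rfl⟩
  have hd0 : d ≠ 0 := Nat.one_le_iff_ne_zero.1 hd
  have hC := isOpen_connectedComponentIn_preimage hX hf.continuousOn hV z
  have hzC := mem_connectedComponentIn hzP
  have hmodel : ψ ∘ f =ᶠ[𝓝 z] φ ^ d := EqOn.eventuallyEq_of_mem hfφ (hC.mem_nhds hzC)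
  have hderiv : deriv (φ ^ d) z = 0 := by
    rw [← hmodel.deriv_eq, deriv_comp z (hψ.1.differentiableAt (hV.mem_nhds hzV))
      (hf.differentiableAt (hX.mem_nhds hzX)), hz, mul_zero]
  have hφz : φ z = 0 := by
    rw [deriv_pow (hφ.1.differentiableAt (hC.mem_nhds hzC))] at hderiv
    have hφ' := hφ.deriv_ne_zero hC isOpen_ball hzC
    exact eq_zero_of_pow_eq_zero (by simpa [hd0, hφ'] using hderiv)
  refine hne (hψ.2.1.injOn hzV hyV ?_)
  rw [hfφ z hzC, hφz, zero_pow hd0, hψy]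

end IsBranchedCovering

end BranchedCovering

/-- `f : X → Y` is a branched covering iff it is nowhere constant,
has no asymptotic value in `Y`, and its set of critical values has no accumulation
point in `Y`. -/
theorem stmt_5 (X Y : Set ℂ) (hX : IsOpen X) (hY : IsOpen Y)
    (f : ℂ → ℂ) (hf : DifferentiableOn ℂ f X) (hXY : f '' X ⊆ Y) :
    IsBranchedCovering f X Y ↔
      (NowhereConstantOn f X ∧
       (¬ ∃ y : ℂ, IsAsympValIn f X Y y) ∧
       (¬ ∃ y ∈ Y, AccPt y (Filter.principal (f '' {z ∈ X | deriv f z = 0})))) := by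
  refine ⟨fun h => ⟨h.nowhereConstantOn hX hf.continuousOn (mapsTo_iff_image_subset.2 hXY), ?_, ?_⟩,
    fun ⟨hN, hA, hC⟩ => ?_⟩
  · rintro ⟨y, hy, hasymp⟩
    exact h.not_isAsympVal hy hasymp
  · rintro ⟨y, hy, hacc⟩
    exact h.not_accPt_criticalValues hX hf hy hacc
  · exact isBranchedCovering_of_nowhereConstantOn hX hY hf hN
      (fun y hy hasymp => hA ⟨y, hy, hasymp⟩) fun y hy hacc => hC ⟨y, hy, hacc⟩
end

section
/- Let X and Y be open subsets of ℂ and f : X → ℂ holomorphic, nowhere constant, with f(X) ⊆ Y, and proper as a map X → Y (the preimage in X of every compact subset of Y is compact). Then f : X → Y is a branched covering. Moreover, if Y is connected, then f has finite degree: there exists d ∈ ℕ such that every y ∈ Y which is not a critical value of f has exactly d preimages in X. -/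
/-! Near a point `x`, a nonconstant holomorphic `f` has the form `f x + φ ^ d` for a local
biholomorphism `φ` and the ramification index `d` of `f` at `x`. The fibre over `y` is compact and
discrete, hence finite, and properness keeps the fibres over points close to `y` inside any given
neighbourhood of it. So the preimage of a small disc about `y` is a disjoint union of such power
discs, one for each point of the fibre, and these are its connected components. Over `w ≠ y` in the
small disc, the power disc at `x` contains exactly `d` points of the fibre, so the fibre over `w`
has as many points as the fibre over `y` counted with multiplicity. The latter number is therefore
locally constant on `Y`: for `w` close to `y`, compare both with the fibre over a third point close
to `w`. -/

open Filter Metric Set Topology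

section Topology

variable {α β ι : Type*} [TopologicalSpace α] [TopologicalSpace β]

theorem connectedComponentIn_biUnion_eq {I : Set ι} {U : ι → Set α}
    (hopen : ∀ i ∈ I, IsOpen (U i)) (hdisj : I.PairwiseDisjoint U) {i : ι} (hi : i ∈ I)
    (hconn : IsPreconnected (U i)) {p : α} (hp : p ∈ U i) :
    connectedComponentIn (⋃ j ∈ I, U j) p = U i := by
  have hpI : p ∈ ⋃ j ∈ I, U j := mem_biUnion hi hp
  refine Subset.antisymm ?_ (hconn.subset_connectedComponentIn hp (subset_biUnion_of_mem hi))
  refine isPreconnected_connectedComponentIn.subset_left_of_subset_union (hopen i hi)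
    (isOpen_biUnion fun j (hj : j ∈ I \ {i}) => hopen j hj.1) ?_ ?_
    ⟨p, mem_connectedComponentIn hpI, hp⟩
  · exact disjoint_iUnion₂_right.2 fun j hj => hdisj hi hj.1 (Ne.symm hj.2)
  · rw [← biUnion_insert, insert_sdiff_singleton, insert_eq_of_mem hi]
    exact connectedComponentIn_subset _ _

theorem eventually_inter_preimage_singleton_subset [T2Space β] [LocallyCompactSpace β]
    {f : α → β} {X O : Set α} {Y : Set β} {y : β} (hf : ContinuousOn f X) (hY : Y ∈ 𝓝 y)
    (hproper : ∀ K ⊆ Y, IsCompact K → IsCompact (X ∩ f ⁻¹' K)) (hO : IsOpen O)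
    (hyO : X ∩ f ⁻¹' {y} ⊆ O) : ∀ᶠ w in 𝓝 y, X ∩ f ⁻¹' {w} ⊆ O := by
  obtain ⟨K, hKy, hKY, hK⟩ := local_compact_nhds hY
  have hescape : IsClosed (f '' ((X ∩ f ⁻¹' K) \ O)) :=
    (((hproper K hKY hK).diff hO).image_of_continuousOn
      (hf.mono (sdiff_subset.trans inter_subset_left))).isClosed
  have hy : y ∉ f '' ((X ∩ f ⁻¹' K) \ O) := by
    rintro ⟨z, ⟨⟨hzX, -⟩, hzO⟩, hzy⟩
    exact hzO (hyO ⟨hzX, hzy⟩)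
  filter_upwards [hKy, hescape.isOpen_compl.mem_nhds hy] with w hwK hw z hz
  by_contra hzO
  exact hw ⟨z, ⟨⟨hz.1, mem_preimage.2 (hz.2 ▸ hwK)⟩, hzO⟩, hz.2⟩

end Topology

theorem eventually_forall_mem_ball {α : Type*} [PseudoMetricSpace α] {p : α → Prop} {y : α}
    (h : ∀ᶠ w in 𝓝 y, p w) : ∀ᶠ r in 𝓝[>] (0 : ℝ), ∀ w ∈ ball y r, p w := by
  obtain ⟨ε, hε, hp⟩ := eventually_nhds_iff_ball.1 h
  filter_upwards [Ioo_mem_nhdsGT hε] with r hr w hw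
  exact hp w (ball_subset_ball hr.2.le hw)

theorem ncard_setOf_pow_eq {K : Type*} [Field K] [IsAlgClosed K] {n : ℕ} (hn : (n : K) ≠ 0)
    {a : K} (ha : a ≠ 0) : {u : K | u ^ n = a}.ncard = n := by
  classical
  have hn₀ : 0 < n := Nat.pos_of_ne_zero fun h => hn (by simp [h])
  have hroots : {u : K | u ^ n = a} = (Polynomial.X ^ n - Polynomial.C a).rootSet K := by
    ext u
    simp [Polynomial.mem_rootSet, Polynomial.X_pow_sub_C_ne_zero hn₀, sub_eq_zero]
  rw [hroots, Set.ncard_eq_toFinset_card', Set.toFinset_card,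
    Polynomial.card_rootSet_eq_natDegree (Polynomial.separable_X_pow_sub_C a hn ha)
      (IsAlgClosed.splits _), Polynomial.natDegree_X_pow_sub_C]

theorem exists_analyticAt_pow_eventuallyEq {E : Type*} [NormedAddCommGroup E] [NormedSpace ℂ E]
    {g : E → ℂ} {x : E} (hg : AnalyticAt ℂ g x) (hgx : g x ≠ 0) {n : ℕ} (hn : n ≠ 0) :
    ∃ k : E → ℂ, AnalyticAt ℂ k x ∧ ∀ᶠ z in 𝓝 x, k z ^ n = g z := by
  obtain ⟨c, hc⟩ := IsAlgClosed.exists_pow_nat_eq (g x) (Nat.pos_of_ne_zero hn)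
  -- Dividing by `g x` moves the values near `1`, away from the branch cut of the logarithm.
  refine ⟨fun z => c * Complex.exp (Complex.log (g z / g x) / n),
    analyticAt_const.mul (((hg.div_const).clog ?_).div_const).cexp, ?_⟩
  · simp [div_self hgx]
  · filter_upwards [hg.continuousAt.eventually_ne hgx] with z hz
    rw [mul_pow, ← Complex.exp_nat_mul, mul_div_cancel₀ _ (Nat.cast_ne_zero.2 hn),
      Complex.exp_log (div_ne_zero hz hgx), hc, mul_div_cancel₀ _ hgx]

section LocalForm

variable {f : ℂ → ℂ} {x : ℂ}

/-- The ramification index of `f` at `x`, also called the local degree or multiplicity: the order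
of vanishing of `f - f x` at `x`. It is `0` if `f` is constant near `x` or not analytic at `x`. -/
noncomputable def ramificationIndex (f : ℂ → ℂ) (x : ℂ) : ℕ :=
  analyticOrderNatAt (f · - f x) x

theorem ramificationIndex_ne_zero (hf : AnalyticAt ℂ f x) (hnc : ¬EventuallyConst f (𝓝 x)) :
    ramificationIndex f x ≠ 0 := by
  rw [eventuallyConst_iff_analyticOrderAt_sub_eq_top] at hnc
  rw [ramificationIndex, ← Nat.cast_ne_zero (R := ℕ∞), Nat.cast_analyticOrderNatAt hnc]
  exact (hf.sub analyticAt_const).analyticOrderAt_ne_zero.2 (sub_self _)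

theorem ramificationIndex_eq_one (hf : AnalyticAt ℂ f x) (hf' : deriv f x ≠ 0) :
    ramificationIndex f x = 1 := by
  rw [ramificationIndex, analyticOrderNatAt, hf.analyticOrderAt_sub_eq_one_of_deriv_ne_zero hf',
    ENat.toNat_one]

theorem exists_eventually_sub_eq_pow (hf : AnalyticAt ℂ f x) (hnc : ¬EventuallyConst f (𝓝 x)) :
    ∃ φ : ℂ → ℂ, AnalyticAt ℂ φ x ∧ φ x = 0 ∧ deriv φ x ≠ 0 ∧
      ∀ᶠ z in 𝓝 x, f z - f x = φ z ^ ramificationIndex f x := by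
  have hd := ramificationIndex_ne_zero hf hnc
  rw [eventuallyConst_iff_analyticOrderAt_sub_eq_top] at hnc
  have hF : AnalyticAt ℂ (f · - f x) x := hf.sub analyticAt_const
  obtain ⟨g, hg, hgx, hfg⟩ := hF.analyticOrderAt_ne_top.1 hnc
  obtain ⟨k, hk, hkg⟩ := exists_analyticAt_pow_eventuallyEq hg hgx hd
  have hkx : k x ≠ 0 := fun h => hgx (by rw [← hkg.self_of_nhds, h, zero_pow hd])
  have hderiv : HasDerivAt (fun z => (z - x) * k z) (k x) x :=
    (((hasDerivAt_id x).sub_const x).mul hk.differentiableAt.hasDerivAt).congr_deriv (by simp)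
  refine ⟨fun z => (z - x) * k z, (analyticAt_id.sub analyticAt_const).mul hk, by simp,
    hderiv.deriv ▸ hkx, ?_⟩
  filter_upwards [hfg, hkg] with z hz hkz
  rw [hz, mul_pow, hkz, smul_eq_mul, ramificationIndex]

end LocalForm

namespace Biholo

variable {φ χ : ℂ → ℂ} {U V W : Set ℂ}

protected theorem comp (hχ : Biholo χ V W) (hφ : Biholo φ U V) : Biholo (χ ∘ φ) U W := by
  obtain ⟨hφd, hφb, φ', hφ'd, hφ'⟩ := hφ
  obtain ⟨hχd, hχb, χ', hχ'd, hχ'⟩ := hχ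
  have hχ'maps : MapsTo χ' W V := hχ'.1.mapsTo hχb.surjOn
  exact ⟨hχd.comp hφd hφb.mapsTo, hχb.comp hφb, φ' ∘ χ', hφ'd.comp hχ'd hχ'maps,
    hφ'.1.comp hχ'.1 hφb.mapsTo, hφ'.2.comp hχ'.2 hχ'maps⟩

theorem restrict (hφ : Biholo φ U V) (hWV : W ⊆ V) : Biholo φ (U ∩ φ ⁻¹' W) W := by
  obtain ⟨hφd, hφb, φ', hφ'd, hφ'⟩ := hφ
  refine ⟨hφd.mono inter_subset_left, ⟨fun z hz => hz.2, hφb.injOn.mono inter_subset_left, ?_⟩,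
    φ', hφ'd.mono hWV, hφ'.mono inter_subset_left hWV⟩
  intro w hw
  obtain ⟨z, hz, rfl⟩ := hφb.surjOn (hWV hw)
  exact ⟨z, ⟨hz, hw⟩, rfl⟩

theorem isPreconnected (hφ : Biholo φ U V) (hV : IsPreconnected V) : IsPreconnected U := by
  obtain ⟨-, hφb, φ', hφ'd, hφ'⟩ := hφ
  have himage : φ' '' V = U := (hφ'.symm.bijOn (hφ'.1.mapsTo hφb.surjOn) hφb.mapsTo).image_eq
  exact himage ▸ hV.image φ' hφ'd.continuousOn

theorem of_openPartialHomeomorph (e : OpenPartialHomeomorph ℂ ℂ)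
    (he : ∀ z ∈ e.source, DifferentiableAt ℂ e z ∧ deriv e z ≠ 0) :
    Biholo e e.source e.target := by
  refine ⟨fun z hz => (he z hz).1.differentiableWithinAt, e.bijOn, e.symm, fun w hw => ?_,
    e.invOn⟩
  obtain ⟨hd, hne⟩ := he _ (e.map_target hw)
  exact (e.hasDerivAt_symm hw hne hd.hasDerivAt).differentiableAt.differentiableWithinAt

end Biholo

theorem exists_biholo_of_deriv_ne_zero {φ : ℂ → ℂ} {x : ℂ} {W : Set ℂ} (hφ : AnalyticAt ℂ φ x)
    (hφ' : deriv φ x ≠ 0) (hW : W ∈ 𝓝 x) :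
    ∃ U V : Set ℂ, IsOpen U ∧ x ∈ U ∧ U ⊆ W ∧ IsOpen V ∧ Biholo φ U V := by
  have hstrict := hφ.hasStrictDerivAt.hasStrictFDerivAt_equiv hφ'
  have hev : ∀ᶠ z in 𝓝 x, z ∈ W ∧ DifferentiableAt ℂ φ z ∧ deriv φ z ≠ 0 :=
    Eventually.and hW ((hφ.eventually_analyticAt.mono fun z hz => hz.differentiableAt).and
      (hφ.deriv.continuousAt.eventually_ne hφ'))
  obtain ⟨O, hO, hOo, hxO⟩ := _root_.eventually_nhds_iff.1 hev
  let e := (hstrict.toOpenPartialHomeomorph φ).restrOpen O hOo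
  exact ⟨e.source, e.target, e.open_source, ⟨hstrict.mem_toOpenPartialHomeomorph_source, hxO⟩,
    fun z hz => (hO z hz.2).1, e.open_target,
    .of_openPartialHomeomorph e fun z hz => (hO z hz.2).2⟩

theorem biholo_sub_div_ball (c : ℂ) {r : ℝ} (hr : 0 < r) :
    Biholo (fun w => (w - c) / r) (ball c r) (ball 0 1) := by
  have hrC : (r : ℂ) ≠ 0 := Complex.ofReal_ne_zero.2 hr.ne'
  have hinv : InvOn (fun u : ℂ => c + r * u) (fun w => (w - c) / r) (ball c r) (ball 0 1) :=
    ⟨fun w _ => by field_simp; ring, fun u _ => by field_simp; ring⟩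
  refine ⟨by fun_prop, hinv.bijOn (fun w hw => ?_) (fun u hu => ?_), _, by fun_prop, hinv⟩
  · rw [mem_ball_iff_norm] at hw
    rwa [mem_ball_zero_iff, norm_div, Complex.norm_of_nonneg hr.le, div_lt_one hr]
  · rw [mem_ball_zero_iff] at hu
    rw [mem_ball_iff_norm, add_sub_cancel_left, norm_mul, Complex.norm_of_nonneg hr.le]
    exact mul_lt_of_lt_one_right hr hu

/-- `U` is a power disc of `f` at `x` of radius `r`: an open neighbourhood of `x` with a
biholomorphism onto the unit disc in which `f`, normalised to send `x` to `0` and the disc of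
radius `r` about `f x` to the unit disc, becomes `u ↦ u ^ d`, where `d` is the ramification
index. -/
structure IsPowerDisc (f : ℂ → ℂ) (x : ℂ) (r : ℝ) (U : Set ℂ) : Prop where
  isOpen : IsOpen U
  mem : x ∈ U
  exists_biholo : ∃ φ : ℂ → ℂ, Biholo φ U (ball 0 1) ∧
    ∀ z ∈ U, (f z - f x) / r = φ z ^ ramificationIndex f x

theorem exists_eventually_isPowerDisc {f : ℂ → ℂ} {x : ℂ} {W : Set ℂ} (hf : AnalyticAt ℂ f x)
    (hnc : ¬EventuallyConst f (𝓝 x)) (hW : W ∈ 𝓝 x) :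
    ∃ O ⊆ W, IsOpen O ∧ x ∈ O ∧
      ∀ᶠ r in 𝓝[>] (0 : ℝ), IsPowerDisc f x r (O ∩ f ⁻¹' ball (f x) r) := by
  have hd := ramificationIndex_ne_zero hf hnc
  obtain ⟨φ, hφ, hφx, hφ', hfφ⟩ := exists_eventually_sub_eq_pow hf hnc
  obtain ⟨O, V, hO, hxO, hOW, hV, hbi⟩ := exists_biholo_of_deriv_ne_zero hφ hφ' (hfφ.and hW)
  have h0V : (0 : ℂ) ∈ V := hφx ▸ hbi.2.1.mapsTo hxO
  obtain ⟨ε, hε, hεV⟩ := isOpen_iff.1 hV 0 h0V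
  refine ⟨O, fun z hz => (hOW hz).2, hO, hxO, ?_⟩
  filter_upwards [Ioo_mem_nhdsGT (pow_pos hε (ramificationIndex f x))] with r ⟨hr, hrε⟩
  obtain ⟨ρ, hρ, rfl⟩ : ∃ ρ : ℝ, 0 < ρ ∧ ρ ^ ramificationIndex f x = r :=
    ⟨_, Real.rpow_pos_of_pos hr _, Real.rpow_inv_natCast_pow hr.le hd⟩
  have hρV : ball (0 : ℂ) ρ ⊆ V :=
    (ball_subset_ball (lt_of_pow_lt_pow_left₀ _ hε.le hrε).le).trans hεV
  have hpre : O ∩ f ⁻¹' ball (f x) (ρ ^ ramificationIndex f x) = O ∩ φ ⁻¹' ball 0 ρ := by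
    ext z
    refine and_congr_right fun hz => ?_
    rw [mem_preimage, mem_preimage, mem_ball_iff_norm, mem_ball_zero_iff, (hOW hz).1, norm_pow]
    exact pow_lt_pow_iff_left₀ (norm_nonneg _) hρ.le hd
  rw [hpre]
  refine ⟨hbi.1.continuousOn.isOpen_inter_preimage hO isOpen_ball, ⟨hxO, by simpa [hφx]⟩,
    _, (biholo_sub_div_ball 0 hρ).comp (hbi.restrict hρV), fun z hz => ?_⟩
  simp only [(hOW hz.1).1, Complex.ofReal_pow, Function.comp_apply, sub_zero, div_pow]

namespace IsPowerDisc

variable {f : ℂ → ℂ} {x : ℂ} {r : ℝ} {U : Set ℂ}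

theorem isPreconnected (h : IsPowerDisc f x r U) : IsPreconnected U := by
  obtain ⟨φ, hφ, -⟩ := h.exists_biholo
  exact hφ.isPreconnected (convex_ball 0 1).isPreconnected

theorem ramificationIndex_ne_zero (h : IsPowerDisc f x r U) : ramificationIndex f x ≠ 0 := by
  intro hd
  obtain ⟨φ, -, hφ⟩ := h.exists_biholo
  simpa [hd] using hφ x h.mem

theorem ncard_fiber (h : IsPowerDisc f x r U) {w : ℂ} (hw : w ∈ ball (f x) r) (hwx : w ≠ f x) :
    (U ∩ f ⁻¹' {w}).ncard = ramificationIndex f x := by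
  have hd := h.ramificationIndex_ne_zero
  have hr : 0 < r := pos_of_mem_ball hw
  obtain ⟨φ, ⟨-, hbij, -⟩, hφ⟩ := h.exists_biholo
  set a : ℂ := (w - f x) / r with ha
  have ha0 : a ≠ 0 := div_ne_zero (sub_ne_zero.2 hwx) (Complex.ofReal_ne_zero.2 hr.ne')
  have ha1 : ‖a‖ < 1 := mem_ball_zero_iff.1 ((biholo_sub_div_ball (f x) hr).2.1.mapsTo hw)
  have hfiber : ∀ z ∈ U, f z = w ↔ φ z ^ ramificationIndex f x = a := fun z hz => by
    rw [← hφ z hz, ha, div_left_inj' (Complex.ofReal_ne_zero.2 hr.ne'), sub_left_inj]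
  have hroots : BijOn φ (U ∩ f ⁻¹' {w}) {u | u ^ ramificationIndex f x = a} := by
    refine ⟨fun z hz => (hfiber z hz.1).1 hz.2, hbij.injOn.mono inter_subset_left, fun u hu => ?_⟩
    have hu1 : ‖u‖ < 1 := by
      rwa [← pow_lt_one_iff_of_nonneg (norm_nonneg u) hd, ← norm_pow, hu]
    obtain ⟨z, hz, rfl⟩ := hbij.surjOn (mem_ball_zero_iff.2 hu1)
    exact ⟨z, ⟨hz, (hfiber z hz).2 hu⟩, rfl⟩
  rw [hroots.ncard_eq, ncard_setOf_pow_eq (Nat.cast_ne_zero.2 hd) ha0]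

end IsPowerDisc

/-- The number of preimages of `w` in `X` under `f`, counted with multiplicity. It is `0` if there
are infinitely many points of positive ramification index over `w`. -/
noncomputable def fiberDegree (f : ℂ → ℂ) (X : Set ℂ) (w : ℂ) : ℕ :=
  ∑ᶠ z ∈ X ∩ f ⁻¹' {w}, ramificationIndex f z

theorem ncard_fiber_eq_fiberDegree {f : ℂ → ℂ} {X : Set ℂ} {w : ℂ} (hf : AnalyticOnNhd ℂ f X)
    (hw : w ∉ f '' {z ∈ X | deriv f z = 0}) : (X ∩ f ⁻¹' {w}).ncard = fiberDegree f X w := by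
  rw [fiberDegree, ← finsum_one]
  refine finsum_mem_congr rfl fun z hz => ?_
  exact (ramificationIndex_eq_one (hf z hz.1) fun h => hw ⟨z, ⟨hz.1, h⟩, hz.2⟩).symm

section ProperMap

variable {f : ℂ → ℂ} {X Y : Set ℂ} {y : ℂ}

theorem NowhereConstantOn.not_eventuallyConst (h : NowhereConstantOn f X) (hX : IsOpen X) {x : ℂ}
    (hx : x ∈ X) : ¬EventuallyConst f (𝓝 x) := by
  intro hconst
  obtain ⟨c, hc⟩ := eventuallyConst_iff_exists_eventuallyEq.1 hconst
  obtain ⟨O, hO, hOo, hxO⟩ := _root_.eventually_nhds_iff.1 (hc.and (hX.mem_nhds hx))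
  exact h O hOo ⟨x, hxO⟩ (fun z hz => (hO z hz).2) ⟨c, fun z hz => (hO z hz).1⟩

theorem finite_fiber (hf : AnalyticOnNhd ℂ f X) (hnc : ∀ x ∈ X, ¬EventuallyConst f (𝓝 x))
    (hcompact : IsCompact (X ∩ f ⁻¹' {y})) : (X ∩ f ⁻¹' {y}).Finite := by
  refine hcompact.finite ?_
  rw [inter_comm]
  exact isDiscrete_of_codiscreteWithin
    (hf.preimage_mem_codiscreteWithin hnc (compl_singleton_mem_codiscreteWithin y))

theorem exists_isPowerDisc_cover (hX : IsOpen X) (hY : Y ∈ 𝓝 y) (hf : AnalyticOnNhd ℂ f X)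
    (hnc : ∀ x ∈ X, ¬EventuallyConst f (𝓝 x))
    (hproper : ∀ K ⊆ Y, IsCompact K → IsCompact (X ∩ f ⁻¹' K)) :
    ∃ r > 0, ball y r ⊆ Y ∧ ∃ U : ℂ → Set ℂ, (X ∩ f ⁻¹' {y}).PairwiseDisjoint U ∧
      X ∩ f ⁻¹' ball y r = ⋃ x ∈ X ∩ f ⁻¹' {y}, U x ∧
      ∀ x ∈ X ∩ f ⁻¹' {y}, IsPowerDisc f x r (U x) := by
  have hfin : (X ∩ f ⁻¹' {y}).Finite := finite_fiber hf hnc <|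
    hproper _ (singleton_subset_iff.2 (mem_of_mem_nhds hY)) isCompact_singleton
  obtain ⟨W, hW, hWdisj⟩ := hfin.t2_separation
  have hlocal : ∀ x ∈ X ∩ f ⁻¹' {y}, ∃ O ⊆ W x ∩ X, IsOpen O ∧ x ∈ O ∧
      ∀ᶠ r in 𝓝[>] (0 : ℝ), IsPowerDisc f x r (O ∩ f ⁻¹' ball y r) := by
    rintro x ⟨hx, rfl⟩
    exact exists_eventually_isPowerDisc (hf x hx) (hnc x hx)
      (inter_mem ((hW x).2.mem_nhds (hW x).1) (hX.mem_nhds hx))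
  choose! O hOW hO hxO hpow using hlocal
  have hnear : ∀ᶠ w in 𝓝 y, w ∈ Y ∧ X ∩ f ⁻¹' {w} ⊆ ⋃ x ∈ X ∩ f ⁻¹' {y}, O x :=
    Eventually.and hY <| eventually_inter_preimage_singleton_subset hf.continuousOn hY hproper
      (isOpen_biUnion hO) fun x hx => mem_biUnion hx (hxO x hx)
  obtain ⟨r, hr, hball, hdisc⟩ := (eventually_mem_nhdsWithin.and
    ((eventually_forall_mem_ball hnear).and
      ((eventually_all_finite hfin).2 hpow))).exists
  refine ⟨r, hr, fun w hw => (hball w hw).1, fun x => O x ∩ f ⁻¹' ball y r, ?_, ?_, hdisc⟩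
  · exact hWdisj.mono_on fun x hx => inter_subset_left.trans ((hOW x hx).trans inter_subset_left)
  · rw [← iUnion₂_inter]
    refine Subset.antisymm (fun z hz => ⟨(hball _ hz.2).2 ⟨hz.1, rfl⟩, hz.2⟩) ?_
    exact inter_subset_inter_left _ (iUnion₂_subset fun x hx => (hOW x hx).trans inter_subset_right)

theorem isBranchedCovering_of_proper (hX : IsOpen X) (hY : IsOpen Y) (hf : AnalyticOnNhd ℂ f X)
    (hnc : ∀ x ∈ X, ¬EventuallyConst f (𝓝 x))
    (hproper : ∀ K ⊆ Y, IsCompact K → IsCompact (X ∩ f ⁻¹' K)) : IsBranchedCovering f X Y := by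
  intro y hy
  obtain ⟨r, hr, hrY, U, hdisj, hcover, hdisc⟩ :=
    exists_isPowerDisc_cover hX (hY.mem_nhds hy) hf hnc hproper
  refine ⟨ball y r, isOpen_ball, mem_ball_self hr, hrY, fun w => (w - y) / r,
    biholo_sub_div_ball y hr, by simp, ?_⟩
  change ∀ C, (∃ p ∈ X ∩ f ⁻¹' ball y r, C = connectedComponentIn (X ∩ f ⁻¹' ball y r) p) → _
  rw [hcover]
  rintro _ ⟨p, hp, rfl⟩
  obtain ⟨x, hx, hpx⟩ := mem_iUnion₂.1 hp
  rw [connectedComponentIn_biUnion_eq (fun z hz => (hdisc z hz).isOpen) hdisj hx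
    (hdisc x hx).isPreconnected hpx]
  obtain ⟨φ, hφ, hpow⟩ := (hdisc x hx).exists_biholo
  refine ⟨ramificationIndex f x, Nat.one_le_iff_ne_zero.2 (hdisc x hx).ramificationIndex_ne_zero,
    φ, hφ, ?_⟩
  rwa [show f x = y from hx.2] at hpow

theorem eventually_ncard_fiber_eq_fiberDegree (hX : IsOpen X) (hY : Y ∈ 𝓝 y)
    (hf : AnalyticOnNhd ℂ f X) (hnc : ∀ x ∈ X, ¬EventuallyConst f (𝓝 x))
    (hproper : ∀ K ⊆ Y, IsCompact K → IsCompact (X ∩ f ⁻¹' K)) :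
    ∀ᶠ w in 𝓝[≠] y, (X ∩ f ⁻¹' {w}).ncard = fiberDegree f X y := by
  obtain ⟨r, hr, -, U, hdisj, hcover, hdisc⟩ := exists_isPowerDisc_cover hX hY hf hnc hproper
  have hfin : (X ∩ f ⁻¹' {y}).Finite := finite_fiber hf hnc <|
    hproper _ (singleton_subset_iff.2 (mem_of_mem_nhds hY)) isCompact_singleton
  filter_upwards [eventually_mem_nhdsWithin, nhdsWithin_le_nhds (ball_mem_nhds y hr)] with w hwy hw
  have hcount : ∀ x ∈ X ∩ f ⁻¹' {y}, (U x ∩ f ⁻¹' {w}).ncard = ramificationIndex f x := by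
    intro x hx
    have hxy : f x = y := hx.2
    exact (hdisc x hx).ncard_fiber (hxy ▸ hw) (hxy ▸ hwy)
  have hfiber : X ∩ f ⁻¹' {w} = ⋃ x ∈ X ∩ f ⁻¹' {y}, U x ∩ f ⁻¹' {w} := by
    rw [← iUnion₂_inter, ← hcover, inter_assoc, ← preimage_inter,
      inter_eq_right.2 (singleton_subset_iff.2 hw)]
  rw [hfiber, hfin.ncard_biUnion _ (hdisj.mono fun x => inter_subset_left), fiberDegree]
  · exact finsum_mem_congr rfl hcount
  · intro x hx
    exact finite_of_ncard_ne_zero (hcount x hx ▸ (hdisc x hx).ramificationIndex_ne_zero)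

theorem eventually_fiberDegree_eq (hX : IsOpen X) (hY : Y ∈ 𝓝 y)
    (hf : AnalyticOnNhd ℂ f X) (hnc : ∀ x ∈ X, ¬EventuallyConst f (𝓝 x))
    (hproper : ∀ K ⊆ Y, IsCompact K → IsCompact (X ∩ f ⁻¹' K)) :
    ∀ᶠ w in 𝓝 y, fiberDegree f X w = fiberDegree f X y := by
  have hcount := eventually_ncard_fiber_eq_fiberDegree hX hY hf hnc hproper
  have hpunctured : ∀ᶠ w in 𝓝[≠] y, fiberDegree f X w = fiberDegree f X y := by
    filter_upwards [eventually_nhdsNE_eventually_nhds_iff.2 hcount,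
      nhdsWithin_le_nhds (eventually_mem_nhds_iff.2 hY)] with w hw hYw
    obtain ⟨v, hvw, hvy⟩ := ((eventually_ncard_fiber_eq_fiberDegree hX hYw hf hnc hproper).and
      (hw.filter_mono nhdsWithin_le_nhds)).exists
    exact hvw.symm.trans hvy
  filter_upwards [insert_mem_nhds_iff.2 hpunctured] with w hw
  exact hw.elim (fun h => h ▸ rfl) id

theorem fiberDegree_eq_of_isPreconnected (hX : IsOpen X) (hY : IsOpen Y)
    (hYc : IsPreconnected Y) (hf : AnalyticOnNhd ℂ f X) (hnc : ∀ x ∈ X, ¬EventuallyConst f (𝓝 x))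
    (hproper : ∀ K ⊆ Y, IsCompact K → IsCompact (X ∩ f ⁻¹' K)) {y₁ y₂ : ℂ} (hy₁ : y₁ ∈ Y)
    (hy₂ : y₂ ∈ Y) : fiberDegree f X y₁ = fiberDegree f X y₂ := by
  have hcont : ContinuousOn (fiberDegree f X) Y := fun y hy =>
    (continuousAt_const.congr_of_eventuallyEq
      (eventually_fiberDegree_eq hX (hY.mem_nhds hy) hf hnc hproper)).continuousWithinAt
  exact hYc.constant hcont hy₁ hy₂

end ProperMap

/-- a nowhere constant proper holomorphic map `f : X → Y` is a branched
covering, and if `Y` is connected it has finite degree: some `d ∈ ℕ` such that every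
non-critical value `y ∈ Y` has exactly `d` preimages in `X`. -/
theorem stmt_6 (X Y : Set ℂ) (hX : IsOpen X) (hY : IsOpen Y)
    (f : ℂ → ℂ) (hf : DifferentiableOn ℂ f X) (hXY : f '' X ⊆ Y)
    (hnc : NowhereConstantOn f X)
    (hproper : ∀ K : Set ℂ, K ⊆ Y → IsCompact K → IsCompact {z ∈ X | f z ∈ K}) :
    IsBranchedCovering f X Y ∧
      (IsConnected Y → ∃ d : ℕ, ∀ y ∈ Y,
        y ∉ f '' {z ∈ X | deriv f z = 0} →
        ∃ s : Finset ℂ, s.card = d ∧ ∀ z : ℂ, z ∈ s ↔ (z ∈ X ∧ f z = y)) := by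
  have hfa : AnalyticOnNhd ℂ f X := hf.analyticOnNhd hX
  have hloc : ∀ x ∈ X, ¬EventuallyConst f (𝓝 x) := fun x hx => hnc.not_eventuallyConst hX hx
  refine ⟨isBranchedCovering_of_proper hX hY hfa hloc hproper, fun hYc => ?_⟩
  obtain ⟨y₀, hy₀⟩ := hYc.nonempty
  refine ⟨fiberDegree f X y₀, fun y hy hcrit => ?_⟩
  have hfin : (X ∩ f ⁻¹' {y}).Finite := finite_fiber hfa hloc
    (hproper _ (singleton_subset_iff.2 hy) isCompact_singleton)
  refine ⟨hfin.toFinset, ?_, fun z => hfin.mem_toFinset⟩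
  rw [← ncard_eq_toFinset_card _ hfin, ncard_fiber_eq_fiberDegree hfa hcrit]
  exact fiberDegree_eq_of_isPreconnected hX hY hYc.isPreconnected hfa hloc hproper hy hy₀
end

section
/- Let U ⊆ ℂ be open and g : U → ℂ holomorphic. Let D ⊆ ℂ be a Jordan domain, i.e. a bounded connected open set whose frontier ∂D is the image of an injective continuous map from the unit circle into ℂ, and assume closure(D) ⊆ U. Let V ⊆ ℂ be open and simply connected. If g(∂D) ⊆ V then g(D) ⊆ V. -/
/-!
The open mapping theorem gives `∂(g(D)) ⊆ g(∂D) ⊆ V`, so it suffices that a bounded set `S` with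
`∂S ⊆ V` lies in the simply connected open set `V`. If some `w ∈ S` were outside `V`, then `z - w`
would have a continuous logarithm on `V`, hence on `∂S`. Extending that logarithm to the plane and
replacing `z - w` by its exponential on `S` gives a nowhere vanishing function on `ℂ` which agrees
with `z - w` far from `w`. It has a continuous logarithm on `ℂ`, whereas `z - w` has none on any
circle around `w`.
-/

open Filter Set Topology

section Logarithm

theorem not_eqOn_exp_comp_sub_sphere {c : ℂ} {r : ℝ} (hr : 0 ≤ r) {L : ℂ → ℂ}
    (hL : ContinuousOn L (Metric.sphere c r)) :
    ¬ EqOn (Complex.exp ∘ L) (· - c) (Metric.sphere c r) := by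
  intro hexp
  let alongCircle : ℝ → ℂ := fun θ ↦ L (circleMap c r θ)
  let linear : ℝ → ℂ := fun θ ↦ L (circleMap c r 0) + θ * Complex.I
  have exp_alongCircle (θ : ℝ) : Complex.exp (alongCircle θ) = r * Complex.exp (θ * Complex.I) := by
    simpa [alongCircle, circleMap] using hexp (circleMap_mem_sphere c hr θ)
  have exp_linear (θ : ℝ) : Complex.exp (linear θ) = r * Complex.exp (θ * Complex.I) := by
    simpa [linear, alongCircle, Complex.exp_add] using exp_alongCircle 0
  have lifts_eq : alongCircle = linear := by
    refine Complex.isCoveringMap_exp.eq_of_comp_eq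
      (hL.comp_continuous (continuous_circleMap c r) (circleMap_mem_sphere c hr))
      (by fun_prop) ?_ 0 (by simp [alongCircle, linear])
    funext θ
    exact Subtype.ext ((exp_alongCircle θ).trans (exp_linear θ).symm)
  have monodromy : L (circleMap c r 0) = L (circleMap c r 0) + (2 * Real.pi : ℝ) * Complex.I := by
    simpa [alongCircle, linear, (periodic_circleMap c r).eq] using congrFun lifts_eq (2 * Real.pi)
  simp [Real.pi_ne_zero] at monodromy

theorem exists_continuous_forall_exp_eq {X : Type*} [TopologicalSpace X] [SimplyConnectedSpace X]
    [LocallyPathConnectedSpace X] {u : X → ℂ} (hu : Continuous u) (hu₀ : ∀ x, u x ≠ 0) :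
    ∃ L : X → ℂ, Continuous L ∧ ∀ x, Complex.exp (L x) = u x := by
  have huniv : IsSimplyConnected (univ : Set X) :=
    (Homeomorph.Set.univ X).toHomotopyEquiv.simplyConnectedSpace
  obtain ⟨L, hL, hexp⟩ := Complex.exists_continuousOn_eqOn_exp_comp huniv isOpen_univ
    hu.continuousOn (by simpa using hu₀)
  exact ⟨L, continuousOn_univ.1 hL, fun x ↦ hexp (mem_univ x)⟩

theorem not_eqOn_exp_comp_sub_frontier {S : Set ℂ} (hS : Bornology.IsBounded S) {w : ℂ}
    (hw : w ∈ S) {L : ℂ → ℂ} (hL : ContinuousOn L (frontier S)) :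
    ¬ EqOn (Complex.exp ∘ L) (· - w) (frontier S) := by
  classical
  intro hexp
  obtain ⟨H, hH⟩ := ContinuousMap.exists_restrict_eq isClosed_frontier
    ⟨_, continuousOn_iff_continuous_domRestrict.1 hL⟩
  have hHL : EqOn H L (frontier S) := fun z hz ↦ DFunLike.congr_fun hH ⟨z, hz⟩
  let u : ℂ → ℂ := S.piecewise (Complex.exp ∘ H) (· - w)
  have hu : Continuous u := by
    refine Continuous.piecewise (fun z hz ↦ ?_) (by fun_prop) (by fun_prop)
    rw [Function.comp_apply, hHL hz]
    exact hexp hz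
  have hu₀ (z : ℂ) : u z ≠ 0 := by
    by_cases hz : z ∈ S
    · simp [u, hz]
    · simpa [u, hz, sub_eq_zero] using (ne_of_mem_of_not_mem hw hz).symm
  obtain ⟨K, hK, hKu⟩ := exists_continuous_forall_exp_eq hu hu₀
  obtain ⟨r, hr, hSr⟩ := hS.subset_ball_lt 0 w
  refine not_eqOn_exp_comp_sub_sphere (c := w) hr.le hK.continuousOn fun z hz ↦ ?_
  have hzS : z ∉ S := fun h ↦ (Metric.mem_ball.1 (hSr h)).ne hz
  simp [hKu, u, hzS]

theorem subset_of_frontier_subset_of_isSimplyConnected {S V : Set ℂ}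
    (hS : Bornology.IsBounded S) (hV : IsOpen V) (hVsc : IsSimplyConnected V)
    (hSV : frontier S ⊆ V) : S ⊆ V := by
  intro w hwS
  by_contra hwV
  obtain ⟨L, hL, hexp⟩ := Complex.exists_continuousOn_eqOn_exp_comp hVsc hV
    (g := (· - w)) (by fun_prop) (by simpa [sub_eq_zero] using hwV)
  exact not_eqOn_exp_comp_sub_frontier hS hwS (hL.mono hSV) (hexp.mono hSV)

end Logarithm

section OpenMapping

variable {D : Set ℂ}

theorem exists_mem_frontier_eq_of_eventually_eq {E : Type*} [NormedAddCommGroup E]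
    [NormedSpace ℂ E] [CompleteSpace E] {g : ℂ → E} {z : ℂ} {c : E} (hD : IsOpen D)
    (hD_ne : D ≠ univ) (hg : DiffContOnCl ℂ g D) (hz : z ∈ D) (hc : ∀ᶠ x in 𝓝 z, g x = c) :
    ∃ b ∈ frontier D, g b = c := by
  let A : Set ℂ := {x ∈ D | ∀ᶠ y in 𝓝 x, g y = c}
  have hAD : A ⊆ D := sep_subset _ _
  have hA : IsOpen A := hD.inter isOpen_setOfPred_eventually_nhds
  obtain ⟨b, hb⟩ : (frontier A).Nonempty :=
    nonempty_frontier_iff.2 ⟨⟨z, hz, hc⟩, fun h ↦ hD_ne (univ_subset_iff.1 (h ▸ hAD))⟩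
  rw [hA.frontier_eq] at hb
  obtain ⟨hbA, hbA'⟩ := hb
  have hbD : b ∉ D := by
    intro hbD
    have hg_an : AnalyticAt ℂ g b := hg.differentiableOn.analyticAt (hD.mem_nhds hbD)
    have hfreq : ∃ᶠ x in 𝓝[≠] b, g x = c :=
      frequently_nhdsWithin_iff.2 <| (mem_closure_iff_frequently.1 hbA).mono fun x hx ↦
        ⟨hx.2.self_of_nhds, ne_of_mem_of_not_mem hx hbA'⟩
    exact hbA' ⟨hbD, (hg_an.frequently_eq_iff_eventually_eq analyticAt_const).1 hfreq⟩
  have hbcl : b ∈ closure D := closure_mono hAD hbA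
  refine ⟨b, hD.frontier_eq ▸ ⟨hbcl, hbD⟩, ?_⟩
  have hmaps : MapsTo g A {c} := fun x hx ↦ hx.2.self_of_nhds
  simpa using hmaps.closure_of_continuousOn (hg.continuousOn.mono (closure_mono hAD)) hbA

theorem frontier_image_subset_image_frontier {g : ℂ → ℂ} (hD : IsOpen D)
    (hDb : Bornology.IsBounded D) (hg : DiffContOnCl ℂ g D) :
    frontier (g '' D) ⊆ g '' frontier D := by
  rintro y ⟨hy_closure, hy_interior⟩
  have himage : closure (g '' D) ⊆ g '' closure D :=
    closure_minimal (image_mono subset_closure)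
      (hDb.isCompact_closure.image_of_continuousOn hg.continuousOn).isClosed
  obtain ⟨z, hz, rfl⟩ := himage hy_closure
  by_cases hzD : z ∈ D
  · have hg_an : AnalyticAt ℂ g z := hg.differentiableOn.analyticAt (hD.mem_nhds hzD)
    rcases hg_an.eventually_constant_or_nhds_le_map_nhds with hconst | hopen
    · have hD_ne : D ≠ univ := by
        rintro rfl
        exact NormedSpace.unbounded_univ ℂ ℂ hDb
      exact exists_mem_frontier_eq_of_eventually_eq hD hD_ne hg hzD hconst
    · exact absurd (mem_interior_iff_mem_nhds.2 (hopen (image_mem_map (hD.mem_nhds hzD))))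
        hy_interior
  · exact mem_image_of_mem g (hD.frontier_eq ▸ ⟨hz, hzD⟩)

end OpenMapping

theorem stmt_11_general {g : ℂ → ℂ} {D V : Set ℂ} (hD : IsOpen D) (hDb : Bornology.IsBounded D)
    (hg : DiffContOnCl ℂ g D) (hV : IsOpen V) (hVsc : IsSimplyConnected V)
    (hgb : g '' frontier D ⊆ V) : g '' D ⊆ V := by
  have himage : Bornology.IsBounded (g '' D) :=
    (hDb.isCompact_closure.image_of_continuousOn hg.continuousOn).isBounded.subset
      (image_mono subset_closure)
  exact subset_of_frontier_subset_of_isSimplyConnected himage hV hVsc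
    ((frontier_image_subset_image_frontier hD hDb hg).trans hgb)

/-- let `g : U → ℂ` be holomorphic, `D` a Jordan domain with
`closure D ⊆ U` and `V` a simply connected open set. If `g(∂D) ⊆ V` then `g(D) ⊆ V`. -/
theorem stmt_11 (U : Set ℂ) (hU : IsOpen U) (g : ℂ → ℂ)
    (hg : DifferentiableOn ℂ g U)
    (D : Set ℂ) (hDo : IsOpen D) (hDb : Bornology.IsBounded D) (hDc : IsConnected D)
    (hJordan : ∃ γ : ℂ → ℂ, ContinuousOn γ (Metric.sphere (0:ℂ) 1) ∧
      Set.InjOn γ (Metric.sphere (0:ℂ) 1) ∧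
      γ '' Metric.sphere (0:ℂ) 1 = frontier D)
    (hDU : closure D ⊆ U)
    (V : Set ℂ) (hV : IsOpen V) (hVsc : SimplyConnectedSpace V)
    (hgb : g '' frontier D ⊆ V) :
    g '' D ⊆ V :=
  stmt_11_general hDo hDb (hg.mono hDU).diffContOnCl hV hVsc hgb
end

section
/- Let U and V be simply connected open subsets of ℂ and g : U → ℂ holomorphic. Then every connected component of g⁻¹(V) = { z ∈ U : g(z) ∈ V } is simply connected. -/
/-!
Say that a plane set has no holes if it contains every bounded open set whose frontier it contains.
A simply connected open set has no holes, since on it `z - a` has a logarithm for every `a` outside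
it. The property passes from `U` and `V` to `U ∩ g⁻¹(V)` and then to its components: if the frontier
of `O` lies in `U ∩ g⁻¹(V)`, then `O ⊆ U`, and the open map `g` sends `O` to an open set whose
frontier lies in `V`.

Conversely, let `W` be open, connected and without holes, and cover a compact set `K ⊆ W` by the
squares of a fine grid that meet it. Every map into `W` from a large rectangle of squares extends to
the plane, and this remains true after the removal of a square with a free edge: the square retracts
onto its three other sides, and along a side a map can be prescribed by a path in `W`. Remove such
squares, as long as there are any that do not meet `K`. What is left, minus the squares meeting `K`,
is an open set with frontier in `W`, hence lies in `W`. So the identity of what is left extends to a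
map from the plane into `W` fixing `K`. If `K` is a loop, this map carries a contraction of the loop
in the plane into `W`.
-/

open Set

section HasNoHoles

variable {X Y : Type*} [TopologicalSpace X] [TopologicalSpace Y]

/-- A set has no holes if it contains every relatively compact open set whose frontier it contains.
For an open subset of the plane this says that the complement has no bounded component; the form
chosen here mentions only the topology and so passes directly to preimages. -/
def HasNoHoles (W : Set X) : Prop :=
  ∀ O : Set X, IsOpen O → IsCompact (closure O) → frontier O ⊆ W → O ⊆ W

lemma HasNoHoles.closure_subset {W O : Set X} (hW : HasNoHoles W) (hO : IsOpen O)
    (hOc : IsCompact (closure O)) (hfr : frontier O ⊆ W) : closure O ⊆ W := by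
  rw [closure_eq_self_union_frontier]
  exact union_subset (hW O hO hOc hfr) hfr

lemma HasNoHoles.inter_preimage [T2Space Y] {U : Set X} {V : Set Y} {g : X → Y}
    (hU : HasNoHoles U) (hV : HasNoHoles V) (hg : ContinuousOn g U)
    (hopen : ∀ s ⊆ U, IsOpen s → IsOpen (g '' s)) : HasNoHoles (U ∩ g ⁻¹' V) := by
  intro O hO hOc hfr
  have hclU : closure O ⊆ U := hU.closure_subset hO hOc (hfr.trans inter_subset_left)
  have hOU : O ⊆ U := subset_closure.trans hclU
  have himage : IsCompact (g '' closure O) := hOc.image_of_continuousOn (hg.mono hclU)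
  have hcl : closure (g '' O) ⊆ g '' closure O :=
    closure_minimal (image_mono subset_closure) himage.isClosed
  have hgO : IsOpen (g '' O) := hopen O hOU hO
  have hfrV : frontier (g '' O) ⊆ V := by
    rw [hgO.frontier_eq]
    rintro w ⟨hw, hwO⟩
    obtain ⟨z, hz, rfl⟩ := hcl hw
    refine (hfr ?_).2
    rw [hO.frontier_eq]
    exact ⟨hz, fun hzO ↦ hwO (mem_image_of_mem g hzO)⟩
  exact subset_inter hOU
    (image_subset_iff.mp (hV _ hgO (himage.of_isClosed_subset isClosed_closure hcl) hfrV))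

lemma HasNoHoles.preimage_homeomorph {W : Set Y} (hW : HasNoHoles W) (φ : X ≃ₜ Y) :
    HasNoHoles (φ ⁻¹' W) := by
  intro O hO hOc hfr
  rw [← image_subset_iff] at hfr ⊢
  refine hW _ (φ.isOpenMap O hO) ?_ (by rwa [← φ.image_frontier])
  rw [← φ.image_closure]
  exact hOc.image φ.continuous

/-- The part of `O` lying in a component of `G` other than that of `x` is clopen. -/
lemma hasNoHoles_connectedComponentIn [LocallyConnectedSpace X] [PreconnectedSpace X]
    [NoncompactSpace X] {G : Set X} (hG : HasNoHoles G) (hGo : IsOpen G) (x : X) :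
    HasNoHoles (connectedComponentIn G x) := by
  intro O hO hOc hfr y hyO
  have hclG : closure O ⊆ G :=
    hG.closure_subset hO hOc (hfr.trans (connectedComponentIn_subset G x))
  by_contra hyx
  have hclosed : IsClosed (O ∩ connectedComponentIn G y) := by
    refine isClosed_of_closure_subset fun z hz ↦ ?_
    have hzO : z ∈ closure O := closure_mono inter_subset_left hz
    obtain ⟨w, hwz, -, hwy⟩ := mem_closure_iff.mp hz _ (hGo.connectedComponentIn (x := z))
      (mem_connectedComponentIn (hclG hzO))
    have hzy : z ∈ connectedComponentIn G y := by
      rw [connectedComponentIn_eq hwy, ← connectedComponentIn_eq hwz]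
      exact mem_connectedComponentIn (hclG hzO)
    refine ⟨by_contra fun hzO' ↦ hyx ?_, hzy⟩
    have hzx : z ∈ connectedComponentIn G x := hfr (hO.frontier_eq ▸ ⟨hzO, hzO'⟩)
    rw [connectedComponentIn_eq hzx, ← connectedComponentIn_eq hzy]
    exact mem_connectedComponentIn (hclG (subset_closure hyO))
  have huniv : O ∩ connectedComponentIn G y = univ :=
    IsClopen.eq_univ ⟨hclosed, hO.inter hGo.connectedComponentIn⟩
      ⟨y, hyO, mem_connectedComponentIn (hclG (subset_closure hyO))⟩
  have hOuniv : O = univ := univ_subset_iff.mp (huniv ▸ inter_subset_left)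
  exact noncompact_univ X (by simpa only [hOuniv, closure_univ] using hOc)

end HasNoHoles

section Logarithm

open Complex

lemma eq_of_continuous_of_exp_eq_const {X : Type*} [TopologicalSpace X] [PreconnectedSpace X]
    {h : X → ℂ} (hh : Continuous h) {c : ℂ} (hc : ∀ x, exp (h x) = c) (x y : X) : h x = h y := by
  have hc₀ : c ≠ 0 := hc x ▸ exp_ne_zero _
  have hdiscrete : IsDiscrete (exp ⁻¹' {c}) := ⟨(isCoveringMapOn_exp c hc₀).1⟩
  exact isPreconnected_univ.constant_of_mapsTo hdiscrete hh.continuousOn (fun x _ ↦ hc x)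
    (mem_univ x) (mem_univ y)

lemma not_exists_continuousOn_exp_eq_sub_on_sphere (a : ℂ) {R : ℝ} (hR : 0 < R) :
    ¬∃ L : ℂ → ℂ, ContinuousOn L (Metric.sphere a R) ∧
      ∀ z ∈ Metric.sphere a R, exp (L z) = z - a := by
  rintro ⟨L, hL, hexp⟩
  have hcircle : ∀ t, circleMap a R t ∈ Metric.sphere a R := circleMap_mem_sphere a hR.le
  have hcont : Continuous fun t : ℝ ↦ L (circleMap a R t) - t * I :=
    (hL.comp_continuous (continuous_circleMap a R) hcircle).sub (by fun_prop)
  have hconst : ∀ t : ℝ, exp (L (circleMap a R t) - t * I) = R := fun t ↦ by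
    rw [exp_sub, hexp _ (hcircle t), circleMap_sub_center, circleMap_zero,
      mul_div_cancel_right₀ _ (exp_ne_zero _)]
  have hturn := eq_of_continuous_of_exp_eq_const hcont hconst (2 * Real.pi) 0
  have hperiod : circleMap a R (2 * Real.pi) = circleMap a R 0 := by
    simpa using periodic_circleMap a R 0
  simp [hperiod, Real.pi_ne_zero] at hturn

/-- If `O` surrounded a point `a ∉ U`, then a logarithm of `z - a` on the frontier of `O` would
extend over `O` by Tietze, so that `z - a` off `O` would extend to a nonvanishing continuous
function on the plane, and would have a continuous logarithm on a large circle. -/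
lemma HasNoHoles.of_isSimplyConnected {U : Set ℂ} (hU : IsSimplyConnected U) (hUo : IsOpen U) :
    HasNoHoles U := by
  classical
  intro O _ hOc hfr a haO
  by_contra haU
  obtain ⟨L, hLc, hL⟩ := exists_continuousOn_eqOn_exp_comp hU hUo
    (g := fun z ↦ z - a) (by fun_prop) (by
      rintro ⟨z, hz, hza⟩
      exact haU (sub_eq_zero.mp hza ▸ hz))
  obtain ⟨M, hM⟩ := ContinuousMap.exists_restrict_eq (isClosed_frontier (s := O))
    ⟨(frontier O).domRestrict L, (hLc.mono hfr).domRestrict⟩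
  let F : ℂ → ℂ := O.piecewise (fun z ↦ exp (M z)) (fun z ↦ z - a)
  have hFc : Continuous F := by
    refine Continuous.piecewise (fun z hz ↦ ?_) (by fun_prop) (by fun_prop)
    have hMz : M z = L z := DFunLike.congr_fun hM ⟨z, hz⟩
    exact hMz ▸ hL (hfr hz)
  have hF₀ : 0 ∉ F '' univ := by
    rintro ⟨z, -, hz⟩
    by_cases hzO : z ∈ O
    · simp [F, hzO] at hz
    · exact hzO (sub_eq_zero.mp (by simpa [F, hzO] using hz : z - a = 0) ▸ haO)
  have huniv : IsSimplyConnected (univ : Set ℂ) :=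
    (Homeomorph.Set.univ ℂ).toHomotopyEquiv.simplyConnectedSpace
  obtain ⟨Λ, hΛc, hΛ⟩ := exists_continuousOn_eqOn_exp_comp huniv isOpen_univ hFc.continuousOn hF₀
  obtain ⟨R, hR, hball⟩ := (hOc.isBounded.subset subset_closure).subset_ball_lt 0 a
  refine not_exists_continuousOn_exp_eq_sub_on_sphere a hR
    ⟨Λ, hΛc.mono (subset_univ _), fun z hz ↦ ?_⟩
  have hzO : z ∉ O := fun h ↦ (Metric.mem_ball.mp (hball h)).ne hz
  exact (hΛ (mem_univ z)).trans (piecewise_eq_of_notMem _ _ _ hzO)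

end Logarithm

section MapExtends

variable {Z Y : Type*} [TopologicalSpace Z] [TopologicalSpace Y] {X : Set Y} {D D' D'' E : Set Z}

/-- Every continuous map from `D` to `X` extends continuously over `D'`. Maps into `X` are encoded
as total functions, of which only the values on the sets concerned matter. -/
def MapExtends (X : Set Y) (D D' : Set Z) : Prop :=
  ∀ f : Z → Y, ContinuousOn f D → MapsTo f D X →
    ∃ F : Z → Y, ContinuousOn F D' ∧ MapsTo F D' X ∧ EqOn F f D

lemma MapExtends.of_subset (h : D' ⊆ D) : MapExtends X D D' :=
  fun f hf hm ↦ ⟨f, hf.mono h, hm.mono_left h, eqOn_refl f D⟩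

lemma MapExtends.trans (hDD' : D ⊆ D') (h : MapExtends X D D') (h' : MapExtends X D' D'') :
    MapExtends X D D'' := by
  intro f hf hm
  obtain ⟨f', hf', hm', he'⟩ := h f hf hm
  obtain ⟨F, hF, hmF, heF⟩ := h' f' hf' hm'
  exact ⟨F, hF, hmF, (heF.mono hDD').trans he'⟩

lemma MapExtends.preimage_homeomorph {Z' : Type*} [TopologicalSpace Z'] (h : MapExtends X D D')
    (σ : Z' ≃ₜ Z) : MapExtends X (σ ⁻¹' D) (σ ⁻¹' D') := by
  intro f hf hm
  have hsymm : MapsTo σ.symm D (σ ⁻¹' D) := fun z hz ↦ by simpa using hz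
  obtain ⟨F, hF, hmF, heF⟩ := h (f ∘ σ.symm) (hf.comp σ.symm.continuous.continuousOn hsymm)
    (hm.comp hsymm)
  exact ⟨F ∘ σ, hF.comp σ.continuous.continuousOn (mapsTo_preimage σ D'),
    hmF.comp (mapsTo_preimage σ D'), fun z hz ↦ by simpa using heF hz⟩

lemma MapExtends.union (hD : IsClosed D) (hE : IsClosed E)
    (h : ∀ f : Z → Y, ContinuousOn f D → MapsTo f D X →
      ∃ k : Z → Y, ContinuousOn k E ∧ MapsTo k E X ∧ EqOn f k (D ∩ E)) :
    MapExtends X D (D ∪ E) := by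
  classical
  intro f hf hm
  obtain ⟨k, hk, hmk, hfk⟩ := h f hf hm
  have hFf : EqOn (D.piecewise f k) f D := piecewise_eqOn D f k
  have hFk : EqOn (D.piecewise f k) k E := fun z hzE ↦ by
    by_cases hzD : z ∈ D
    · rw [hFf hzD, hfk ⟨hzD, hzE⟩]
    · exact piecewise_eq_of_notMem D f k hzD
  exact ⟨_, (hf.congr hFf).union_of_isClosed (hk.congr hFk) hD hE,
    (hm.congr hFf.symm).union (hmk.congr hFk.symm), hFf⟩

lemma MapExtends.union_of_retraction (hD : IsClosed D) (hE : IsClosed E) {r : Z → Z}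
    (hr : ContinuousOn r E) (hrD : MapsTo r E D) (hfix : ∀ z ∈ D ∩ E, r z = z) :
    MapExtends X D (D ∪ E) :=
  MapExtends.union hD hE fun f hf hm ↦ ⟨f ∘ r, hf.comp hr hrD, hm.comp hrD,
    fun z hz ↦ congrArg f (hfix z hz).symm⟩

/-- Along `E` the map follows a path between its values at `a` and `b`. -/
lemma MapExtends.union_of_inter_subset_pair [T4Space Z] (hX : IsPathConnected X) (hD : IsClosed D)
    (hE : IsClosed E) {a b : Z} (hab : a ≠ b) (hDE : D ∩ E ⊆ {a, b}) :
    MapExtends X D (D ∪ E) := by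
  classical
  refine MapExtends.union hD hE fun f _ hm ↦ ?_
  obtain ⟨x₀, hx₀⟩ := hX.nonempty
  let v : Z → Y := D.piecewise f fun _ ↦ x₀
  have hv : ∀ z, v z ∈ X := fun z ↦ by
    by_cases hz : z ∈ D
    · simpa [v, hz] using hm hz
    · simpa [v, hz] using hx₀
  obtain ⟨γ, hγ⟩ := hX.joinedIn _ (hv a) _ (hv b)
  obtain ⟨h, hha, hhb, hh⟩ := exists_continuous_zero_one_of_isClosed (isClosed_singleton (x := a))
    isClosed_singleton (disjoint_singleton.mpr hab)
  refine ⟨fun z ↦ γ ⟨h z, hh z⟩, by fun_prop, fun z _ ↦ hγ _, fun z hz ↦ ?_⟩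
  have hfv : f z = v z := (piecewise_eq_of_mem D f _ hz.1).symm
  rcases hDE hz with rfl | rfl
  · have hz₀ : (⟨h z, hh z⟩ : unitInterval) = 0 := Subtype.ext (hha rfl)
    simp only [hfv, hz₀, γ.source]
  · have hz₁ : (⟨h z, hh z⟩ : unitInterval) = 1 := Subtype.ext (hhb rfl)
    simp only [hfv, hz₁, γ.target]

end MapExtends

instance topologicalLatticeProd {L M : Type*} [TopologicalSpace L] [TopologicalSpace M] [Lattice L]
    [Lattice M] [TopologicalLattice L] [TopologicalLattice M] : TopologicalLattice (L × M) where
  continuous_inf := .prodMk (by fun_prop) (by fun_prop)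
  continuous_sup := .prodMk (by fun_prop) (by fun_prop)

lemma mapExtends_Icc_univ {Z Y : Type*} [TopologicalSpace Z] [Lattice Z] [TopologicalLattice Z]
    [OrderClosedTopology Z] [TopologicalSpace Y] {X : Set Y} {a b : Z} (hab : a ≤ b) :
    MapExtends X (Icc a b) univ := by
  rw [← union_univ (Icc a b)]
  refine MapExtends.union_of_retraction isClosed_Icc isClosed_univ (r := fun z ↦ a ⊔ b ⊓ z)
    (by fun_prop) (fun z _ ↦ ⟨le_sup_left, sup_le hab inf_le_left⟩) ?_
  rintro z ⟨⟨haz, hzb⟩, -⟩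
  rw [inf_eq_right.mpr hzb, sup_eq_right.mpr haz]

section Grid

/-- The closed square of side `2` centred at the point `2 * p` of the plane; these squares tile the
plane. The sup metric of `ℝ × ℝ` makes them balls. -/
def gridSquare (p : ℤ × ℤ) : Set (ℝ × ℝ) := Metric.closedBall (2 * p.1, 2 * p.2) 1

/-- The union of the grid squares indexed by a set of lattice points. -/
def gridUnion (A : Set (ℤ × ℤ)) : Set (ℝ × ℝ) := ⋃ p ∈ A, gridSquare p

/-- The steps from a lattice point to its four nearest neighbours. -/
def unitSteps : Set (ℤ × ℤ) := {(1, 0), (-1, 0), (0, 1), (0, -1)}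

variable {A B : Set (ℤ × ℤ)} {p : ℤ × ℤ} {z : ℝ × ℝ}

lemma mem_gridSquare : z ∈ gridSquare p ↔ |z.1 - 2 * p.1| ≤ 1 ∧ |z.2 - 2 * p.2| ≤ 1 := by
  simp only [gridSquare, Metric.mem_closedBall, Prod.dist_eq, Real.dist_eq, max_le_iff]

lemma mem_gridUnion : z ∈ gridUnion A ↔ ∃ p ∈ A, z ∈ gridSquare p := by
  simp only [gridUnion, mem_iUnion, exists_prop]

lemma gridUnion_mono (h : A ⊆ B) : gridUnion A ⊆ gridUnion B := biUnion_mono h fun _ _ ↦ le_rfl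

lemma gridSquare_subset_gridUnion (hp : p ∈ A) : gridSquare p ⊆ gridUnion A :=
  subset_biUnion_of_mem hp

lemma isClosed_gridSquare : IsClosed (gridSquare p) := Metric.isClosed_closedBall

lemma gridSquare_subset_closedBall (hz : z ∈ gridSquare p) :
    gridSquare p ⊆ Metric.closedBall z 2 := by
  intro w hw
  have htri := dist_triangle_right w z (2 * p.1, 2 * p.2)
  exact htri.trans (by linarith [Metric.mem_closedBall.mp hw, Metric.mem_closedBall.mp hz])

lemma locallyFinite_gridSquare : LocallyFinite gridSquare := by
  intro z
  refine ⟨Metric.closedBall z 1, Metric.closedBall_mem_nhds z one_pos, ?_⟩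
  refine (finite_Icc ((⌈(z.1 - 2) / 2⌉, ⌈(z.2 - 2) / 2⌉) : ℤ × ℤ)
    (⌊(z.1 + 2) / 2⌋, ⌊(z.2 + 2) / 2⌋)).subset ?_
  rintro p ⟨w, hwp, hwz⟩
  have hp : dist z (2 * p.1, 2 * p.2) ≤ 2 := by
    linarith [dist_triangle_left z (2 * p.1, 2 * p.2) w, Metric.mem_closedBall.mp hwp,
      Metric.mem_closedBall.mp hwz]
  simp only [Prod.dist_eq, Real.dist_eq, max_le_iff, abs_le] at hp
  simp only [mem_Icc, Prod.le_def, Int.ceil_le, Int.le_floor]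
  refine ⟨⟨?_, ?_⟩, ?_, ?_⟩ <;> linarith

lemma isClosed_gridUnion (A : Set (ℤ × ℤ)) : IsClosed (gridUnion A) := by
  rw [gridUnion, biUnion_eq_iUnion]
  exact (locallyFinite_gridSquare.comp_injective Subtype.val_injective).isClosed_iUnion
    fun _ ↦ isClosed_gridSquare

lemma isCompact_gridUnion (hA : A.Finite) : IsCompact (gridUnion A) :=
  hA.isCompact_biUnion fun _ _ ↦ isCompact_closedBall _ _

lemma exists_int_abs_sub_two_mul_le {a b : ℤ} (hab : a ≤ b) {x : ℝ} (hax : 2 * a - 1 ≤ x)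
    (hxb : x ≤ 2 * b + 1) : ∃ m ∈ Icc a b, |x - 2 * m| ≤ 1 := by
  have hceil := Int.le_ceil ((x - 1) / 2)
  have hlt := Int.ceil_lt_add_one ((x - 1) / 2)
  refine ⟨max a ⌈(x - 1) / 2⌉, ⟨le_max_left _ _, max_le hab ?_⟩, ?_⟩
  · exact Int.ceil_le.mpr (by linarith)
  · rcases max_cases a ⌈(x - 1) / 2⌉ with ⟨h, h'⟩ | ⟨h, -⟩ <;> rw [h, abs_le]
    · have : (x - 1) / 2 ≤ a := Int.ceil_le.mp h'
      constructor <;> linarith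
    · constructor <;> linarith

lemma gridUnion_Icc {a b : ℤ × ℤ} (hab : a ≤ b) : gridUnion (Icc a b) =
    Icc ((2 * a.1 - 1, 2 * a.2 - 1) : ℝ × ℝ) (2 * b.1 + 1, 2 * b.2 + 1) := by
  ext z
  simp only [mem_gridUnion, mem_gridSquare, mem_Icc, Prod.le_def]
  constructor
  · rintro ⟨p, ⟨⟨ha₁, ha₂⟩, hb₁, hb₂⟩, hz⟩
    rify at ha₁ ha₂ hb₁ hb₂
    simp only [abs_le] at hz
    refine ⟨⟨?_, ?_⟩, ?_, ?_⟩ <;> linarith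
  · rintro ⟨⟨ha₁, ha₂⟩, hb₁, hb₂⟩
    obtain ⟨m, hm, hzm⟩ := exists_int_abs_sub_two_mul_le hab.1 ha₁ hb₁
    obtain ⟨n, hn, hzn⟩ := exists_int_abs_sub_two_mul_le hab.2 ha₂ hb₂
    exact ⟨(m, n), ⟨⟨hm.1, hn.1⟩, hm.2, hn.2⟩, hzm, hzn⟩

lemma exists_mem_gridSquare (z : ℝ × ℝ) : ∃ p, z ∈ gridSquare p := by
  refine ⟨(round (z.1 / 2), round (z.2 / 2)), mem_gridSquare.mpr ⟨?_, ?_⟩⟩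
  · have h := abs_sub_round (z.1 / 2)
    rw [abs_le] at h ⊢
    constructor <;> linarith
  · have h := abs_sub_round (z.2 / 2)
    rw [abs_le] at h ⊢
    constructor <;> linarith

lemma eq_or_eq_add_one_or_eq_sub_one_of_abs_le {x : ℝ} {m k : ℤ} (hm : |x - 2 * m| ≤ 1)
    (hk : |x - 2 * k| ≤ 1) : k = m ∨ (k = m + 1 ∧ x = 2 * m + 1) ∨ (k = m - 1 ∧ x = 2 * m - 1) := by
  rw [abs_le] at hm hk
  have hkm : (k : ℝ) < m + 2 := by linarith
  have hmk : (m : ℝ) < k + 2 := by linarith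
  norm_cast at hkm hmk
  obtain rfl | rfl | rfl : k = m ∨ k = m + 1 ∨ k = m - 1 := by omega
  · exact Or.inl rfl
  · push_cast at hk
    exact Or.inr (Or.inl ⟨rfl, by linarith⟩)
  · push_cast at hk
    exact Or.inr (Or.inr ⟨rfl, by linarith⟩)

end Grid

section FreeEdge

variable {Y : Type*} [TopologicalSpace Y] {X : Set Y} {A : Set (ℤ × ℤ)} {p q u : ℤ × ℤ}
  {z : ℝ × ℝ}

lemma mem_gridSquare_zero : z ∈ gridSquare 0 ↔ |z.1| ≤ 1 ∧ |z.2| ≤ 1 := by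
  simp [mem_gridSquare]

lemma finite_unitSteps : unitSteps.Finite := by simp [unitSteps]

lemma ne_zero_of_mem_unitSteps (hu : u ∈ unitSteps) : u ≠ 0 := by
  rintro rfl
  simp [unitSteps, Prod.ext_iff] at hu

lemma eq_zero_or_eq_of_mem_gridSquare_inter (hz₀ : z ∈ gridSquare 0) (hzp : z ∈ gridSquare p) :
    (p.1 = 0 ∨ z.1 = p.1 ∧ |z.1| = 1) ∧ (p.2 = 0 ∨ z.2 = p.2 ∧ |z.2| = 1) := by
  have hcoord : ∀ {x : ℝ} {k : ℤ}, |x| ≤ 1 → |x - 2 * k| ≤ 1 → k = 0 ∨ x = k ∧ |x| = 1 := by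
    intro x k hx hk
    rcases eq_or_eq_add_one_or_eq_sub_one_of_abs_le (m := 0) (by simpa using hx) hk with
      rfl | ⟨rfl, rfl⟩ | ⟨rfl, rfl⟩ <;> norm_num
  rw [mem_gridSquare_zero] at hz₀
  rw [mem_gridSquare] at hzp
  exact ⟨hcoord hz₀.1 hzp.1, hcoord hz₀.2 hzp.2⟩

lemma abs_eq_one_of_mem_gridSquare_inter (hu₀ : u ≠ 0) (hp₀ : p ≠ 0) (hpu : p ≠ u)
    (hz₀ : z ∈ gridSquare 0) (hzu : z ∈ gridSquare u) (hzp : z ∈ gridSquare p) :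
    |z.1| = 1 ∧ |z.2| = 1 := by
  obtain ⟨hu₁, hu₂⟩ := eq_zero_or_eq_of_mem_gridSquare_inter hz₀ hzu
  obtain ⟨hp₁, hp₂⟩ := eq_zero_or_eq_of_mem_gridSquare_inter hz₀ hzp
  rcases hp₁ with hp₁ | ⟨hzp₁, hz₁⟩ <;> rcases hp₂ with hp₂ | ⟨hzp₂, hz₂⟩
  · exact absurd (Prod.ext hp₁ hp₂) hp₀
  · refine ⟨hu₁.resolve_left (fun hu₁ ↦ hpu (Prod.ext (hp₁.trans hu₁.symm) ?_)) |>.2, hz₂⟩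
    have hzu₂ := hu₂.resolve_left fun hu₂ ↦ hu₀ (Prod.ext hu₁ hu₂)
    exact_mod_cast hzp₂.symm.trans hzu₂.1
  · refine ⟨hz₁, hu₂.resolve_left (fun hu₂ ↦ hpu (Prod.ext ?_ (hp₂.trans hu₂.symm))) |>.2⟩
    have hzu₁ := hu₁.resolve_left fun hu₁ ↦ hu₀ (Prod.ext hu₁ hu₂)
    exact_mod_cast hzp₁.symm.trans hzu₁.1
  · exact ⟨hz₁, hz₂⟩

lemma mem_pair_of_abs_eq_one (hu : u ∈ unitSteps) (hz : z ∈ gridSquare u) (h₁ : |z.1| = 1)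
    (h₂ : |z.2| = 1) :
    z = ((u.1 + u.2 : ℝ), (u.1 + u.2 : ℝ)) ∨ z = ((u.1 - u.2 : ℝ), (u.2 - u.1 : ℝ)) := by
  rw [mem_gridSquare, abs_le, abs_le] at hz
  rw [abs_eq one_pos.le] at h₁ h₂
  obtain rfl | rfl | rfl | rfl := hu <;> grind

lemma mapExtends_gridUnion_union_edges (hX : IsPathConnected X) (h₀ : 0 ∉ A) {T : Set (ℤ × ℤ)}
    (hT : T ⊆ unitSteps) : MapExtends X (gridUnion A)
      (gridUnion A ∪ ⋃ u ∈ T, gridSquare 0 ∩ gridSquare u) := by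
  have hTfin : T.Finite := finite_unitSteps.subset hT
  induction T, hTfin using Set.Finite.induction_on with
  | empty => exact .of_subset (by simp)
  | @insert u T huT hTfin ih =>
    obtain ⟨hu, hT⟩ := insert_subset_iff.mp hT
    refine (ih hT).trans subset_union_left ?_
    rw [biUnion_insert, union_comm (gridSquare 0 ∩ gridSquare u), ← union_assoc]
    by_cases huA : u ∈ A
    · exact .of_subset (union_subset subset_rfl (inter_subset_right.trans
        ((gridSquare_subset_gridUnion huA).trans subset_union_left)))
    have hclosed : ∀ v, IsClosed (gridSquare 0 ∩ gridSquare v) :=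
      fun v ↦ isClosed_gridSquare.inter isClosed_gridSquare
    refine .union_of_inter_subset_pair hX
      ((isClosed_gridUnion A).union (hTfin.isClosed_biUnion fun v _ ↦ hclosed v)) (hclosed u)
      (a := ((u.1 + u.2 : ℝ), (u.1 + u.2 : ℝ)))
      (b := ((u.1 - u.2 : ℝ), (u.2 - u.1 : ℝ))) ?_ ?_
    · obtain rfl | rfl | rfl | rfl := hu <;> norm_num
    rintro z ⟨hzD, hz₀, hzu⟩
    obtain ⟨p, hp₀, hpu, hzp⟩ : ∃ p, p ≠ 0 ∧ p ≠ u ∧ z ∈ gridSquare p := by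
      rcases hzD with hzA | hzT
      · obtain ⟨p, hpA, hzp⟩ := mem_gridUnion.mp hzA
        exact ⟨p, ne_of_mem_of_not_mem hpA h₀, ne_of_mem_of_not_mem hpA huA, hzp⟩
      · obtain ⟨v, hvT, -, hzv⟩ := mem_iUnion₂.mp hzT
        exact ⟨v, ne_zero_of_mem_unitSteps (hT hvT), ne_of_mem_of_not_mem hvT huT, hzv⟩
    obtain ⟨h₁, h₂⟩ := abs_eq_one_of_mem_gridSquare_inter
      (ne_zero_of_mem_unitSteps hu) hp₀ hpu hz₀ hzu hzp
    exact mem_pair_of_abs_eq_one hu hzu h₁ h₂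

/-- Unfold the left, lower and right sides of the square to the interval `[-3, 3]`; then
`x * (2 + y)` is a continuous function on the square extending the unfolded coordinate. -/
lemma exists_retraction_onto_three_sides : ∃ r : ℝ × ℝ → ℝ × ℝ, Continuous r ∧
    (∀ z ∈ gridSquare 0, r z ∈ gridSquare 0 ∧ (|(r z).1| = 1 ∨ (r z).2 = -1)) ∧
    ∀ z ∈ gridSquare 0, |z.1| = 1 ∨ z.2 = -1 → r z = z := by
  let fold : ℝ → ℝ × ℝ := fun s ↦ (max (-1) (min 1 s), max (|s| - 1) 0 - 1)
  have hfold : ∀ s, |s| ≤ 3 →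
      fold s ∈ gridSquare 0 ∧ (|(fold s).1| = 1 ∨ (fold s).2 = -1) := by
    intro s hs
    rw [mem_gridSquare_zero]
    grind
  refine ⟨fun z ↦ fold (z.1 * (2 + z.2)), by fun_prop, fun z hz ↦ hfold _ ?_, ?_⟩
  · obtain ⟨h₁, h₂⟩ := mem_gridSquare_zero.mp hz
    rw [abs_mul]
    have hy : |2 + z.2| ≤ 3 := (abs_add_le 2 z.2).trans (by linarith [abs_two (α := ℝ)])
    calc |z.1| * |2 + z.2| ≤ 1 * 3 := by gcongr
      _ = 3 := one_mul 3
  · rintro ⟨x, y⟩ hz hside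
    obtain ⟨hx, hy⟩ := mem_gridSquare_zero.mp hz
    simp only [abs_eq one_pos.le] at hside
    rw [abs_le] at hx hy
    simp only [fold]
    grind

lemma exists_mem_gridSquare_of_mem_three_sides (hz₀ : z ∈ gridSquare 0)
    (hz : |z.1| = 1 ∨ z.2 = -1) : ∃ u ∈ unitSteps \ {(0, 1)}, z ∈ gridSquare u := by
  obtain ⟨h₁, h₂⟩ := mem_gridSquare_zero.mp hz₀
  rw [abs_eq one_pos.le] at hz
  simp only [mem_gridSquare]
  rcases hz with (hz | hz) | hz
  · exact ⟨(1, 0), by simp [unitSteps], by norm_num [hz], by simpa using h₂⟩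
  · exact ⟨(-1, 0), by simp [unitSteps], by norm_num [hz], by simpa using h₂⟩
  · exact ⟨(0, -1), by simp [unitSteps], by simpa using h₁, by norm_num [hz]⟩

lemma mem_three_sides_of_mem_gridSquare (hp₀ : p ≠ 0) (hp₁ : p ≠ (0, 1))
    (hz₀ : z ∈ gridSquare 0) (hzp : z ∈ gridSquare p) : |z.1| = 1 ∨ z.2 = -1 := by
  obtain ⟨hz₁, hz₂⟩ := eq_zero_or_eq_of_mem_gridSquare_inter hz₀ hzp
  refine hz₁.symm.imp And.right fun hp₁₀ ↦ ?_
  obtain ⟨hzp₂, hz₂⟩ := hz₂.resolve_left fun hp₂₀ ↦ hp₀ (Prod.ext hp₁₀ hp₂₀)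
  refine (eq_or_eq_neg_of_abs_eq hz₂).resolve_left fun hz ↦ hp₁ (Prod.ext hp₁₀ ?_)
  exact_mod_cast hzp₂.symm.trans hz

lemma mapExtends_gridUnion_insert_zero (hX : IsPathConnected X) (h₀ : 0 ∉ A)
    (h₁ : (0, 1) ∉ A) : MapExtends X (gridUnion A) (gridUnion (insert 0 A)) := by
  obtain ⟨r, hr, hrsides, hrfix⟩ := exists_retraction_onto_three_sides
  let D := gridUnion A ∪ ⋃ u ∈ unitSteps \ {(0, 1)}, gridSquare 0 ∩ gridSquare u
  have hDclosed : IsClosed D :=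
    (isClosed_gridUnion A).union (finite_unitSteps.sdiff.isClosed_biUnion fun u _ ↦
      isClosed_gridSquare.inter isClosed_gridSquare)
  have hrD : MapsTo r (gridSquare 0) D := by
    intro z hz
    obtain ⟨hrz₀, hrz⟩ := hrsides z hz
    obtain ⟨u, hu, hrzu⟩ := exists_mem_gridSquare_of_mem_three_sides hrz₀ hrz
    exact Or.inr (mem_iUnion₂.mpr ⟨u, hu, hrz₀, hrzu⟩)
  have hfix : ∀ z ∈ D ∩ gridSquare 0, r z = z := by
    rintro z ⟨hzD, hz₀⟩
    obtain ⟨p, hp₀, hp₁, hzp⟩ : ∃ p, p ≠ 0 ∧ p ≠ (0, 1) ∧ z ∈ gridSquare p := by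
      rcases hzD with hzA | hzu
      · obtain ⟨p, hpA, hzp⟩ := mem_gridUnion.mp hzA
        exact ⟨p, ne_of_mem_of_not_mem hpA h₀, ne_of_mem_of_not_mem hpA h₁, hzp⟩
      · obtain ⟨u, ⟨hu, hu₁⟩, -, hzu⟩ := mem_iUnion₂.mp hzu
        exact ⟨u, ne_zero_of_mem_unitSteps hu, hu₁, hzu⟩
    exact hrfix z hz₀ (mem_three_sides_of_mem_gridSquare hp₀ hp₁ hz₀ hzp)
  have hedges : MapExtends X (gridUnion A) D :=
    mapExtends_gridUnion_union_edges hX h₀ sdiff_subset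
  have hsquare : MapExtends X D (D ∪ gridSquare 0) :=
    .union_of_retraction hDclosed isClosed_gridSquare hr.continuousOn hrD hfix
  refine hedges.trans subset_union_left (hsquare.trans subset_union_left (.of_subset ?_))
  rw [gridUnion, biUnion_insert, union_comm]
  exact union_subset_union_left _ subset_union_left

lemma sub_mem_gridSquare_sub : z - ((2 * p.1, 2 * p.2) : ℝ × ℝ) ∈ gridSquare (q - p) ↔
    z ∈ gridSquare q := by
  simp only [mem_gridSquare, Prod.fst_sub, Prod.snd_sub, Int.cast_sub, mul_sub,
    sub_sub_sub_cancel_right]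

lemma neg_mem_gridSquare_neg : -z ∈ gridSquare (-q) ↔ z ∈ gridSquare q := by
  simp only [mem_gridSquare, Prod.fst_neg, Prod.snd_neg, Int.cast_neg, mul_neg, ← neg_sub',
    abs_neg]

lemma swap_mem_gridSquare_swap : z.swap ∈ gridSquare q.swap ↔ z ∈ gridSquare q := by
  simp only [mem_gridSquare, Prod.fst_swap, Prod.snd_swap, and_comm]

lemma exists_symmetry_of_mem_unitSteps (hu : u ∈ unitSteps) :
    ∃ (σ : ℝ × ℝ ≃ₜ ℝ × ℝ) (e : ℤ × ℤ ≃ ℤ × ℤ),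
      (∀ q z, σ z ∈ gridSquare (e q) ↔ z ∈ gridSquare q) ∧ e 0 = 0 ∧ e u = (0, 1) := by
  obtain rfl | rfl | rfl | rfl := hu
  · exact ⟨.prodComm ℝ ℝ, .prodComm ℤ ℤ, fun _ _ ↦ swap_mem_gridSquare_swap, rfl, rfl⟩
  · exact ⟨(Homeomorph.neg _).trans (.prodComm ℝ ℝ), (Equiv.neg _).trans (.prodComm ℤ ℤ),
      fun _ _ ↦ swap_mem_gridSquare_swap.trans neg_mem_gridSquare_neg, rfl, rfl⟩
  · exact ⟨.refl _, .refl _, fun _ _ ↦ Iff.rfl, rfl, rfl⟩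
  · exact ⟨.neg _, .neg _, fun _ _ ↦ neg_mem_gridSquare_neg, rfl, rfl⟩

/-- The grid has a symmetry carrying `p` and its neighbour `p + u` to `0` and `(0, 1)`. -/
lemma mapExtends_gridUnion_insert (hX : IsPathConnected X) (hu : u ∈ unitSteps) (hp : p ∉ A)
    (hpu : p + u ∉ A) : MapExtends X (gridUnion A) (gridUnion (insert p A)) := by
  obtain ⟨σ, e, hσ, he₀, heu⟩ := exists_symmetry_of_mem_unitSteps hu
  let τ := (Homeomorph.subRight ((2 * p.1, 2 * p.2) : ℝ × ℝ)).trans σ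
  let t := (Equiv.subRight p).trans e
  have hp₀ : t p = 0 := by simp [t, he₀]
  have hpu₁ : t (p + u) = (0, 1) := by simp [t, heu]
  have hpre : ∀ B, τ ⁻¹' gridUnion (t '' B) = gridUnion B := by
    intro B
    ext z
    rw [mem_preimage, mem_gridUnion, exists_mem_image, mem_gridUnion]
    exact exists_congr fun q ↦ and_congr_right fun _ ↦
      (hσ (q - p) _).trans sub_mem_gridSquare_sub
  rw [← hpre A, ← hpre (insert p A), image_insert_eq, hp₀]
  refine (mapExtends_gridUnion_insert_zero hX ?_ ?_).preimage_homeomorph τ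
  · rwa [← hp₀, t.injective.mem_set_image]
  · rwa [← hpu₁, t.injective.mem_set_image]

end FreeEdge

section Filling

variable {Y : Type*} [TopologicalSpace Y] {X : Set Y} {S A : Set (ℤ × ℤ)} {p q : ℤ × ℤ}
  {z : ℝ × ℝ}

/-- Remove squares with a free edge, one at a time, from a large rectangle. -/
lemma exists_finite_mapExtends_gridUnion_univ (hX : IsPathConnected X) (hS : S.Finite) :
    ∃ A : Set (ℤ × ℤ), A.Finite ∧ S ⊆ A ∧ MapExtends X (gridUnion A) univ ∧
      ∀ p ∈ A \ S, ∀ u ∈ unitSteps, p + u ∈ A := by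
  obtain ⟨a, b, hab, hSab⟩ : ∃ a b, a ≤ b ∧ S ⊆ Icc a b := by
    obtain ⟨⟨a, ha⟩, b, hb⟩ := And.intro hS.bddBelow hS.bddAbove
    exact ⟨a, a ⊔ b, le_sup_left, fun p hp ↦ ⟨ha hp, (hb hp).trans le_sup_right⟩⟩
  let candidates := {A ⊆ Icc a b | S ⊆ A ∧ MapExtends X (gridUnion A) univ}
  have hfin : candidates.Finite := (finite_Icc a b).finite_subsets.subset fun A hA ↦ hA.1
  have hrectangle : MapExtends X (gridUnion (Icc a b)) univ := by
    obtain ⟨h₁, h₂⟩ := hab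
    rw [gridUnion_Icc ⟨h₁, h₂⟩]
    rify at h₁ h₂
    exact mapExtends_Icc_univ ⟨by dsimp only; linarith, by dsimp only; linarith⟩
  have hIcc : Icc a b ∈ candidates := ⟨subset_rfl, hSab, hrectangle⟩
  obtain ⟨A, ⟨hAab, hSA, hA⟩, hmin⟩ := hfin.exists_minimal ⟨_, hIcc⟩
  refine ⟨A, (finite_Icc a b).subset hAab, hSA, hA, fun p ⟨hpA, hpS⟩ u hu ↦ ?_⟩
  by_contra hpu
  have hstep : MapExtends X (gridUnion (A \ {p})) (gridUnion A) := by
    simpa [insert_eq_of_mem hpA] using mapExtends_gridUnion_insert hX hu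
      (notMem_sdiff_of_mem (mem_singleton p)) fun h ↦ hpu (sdiff_subset h)
  have hsmaller : A \ {p} ∈ candidates := ⟨sdiff_subset.trans hAab,
    subset_sdiff_singleton hSA hpS, hstep.trans (gridUnion_mono sdiff_subset) hA⟩
  exact (hmin hsmaller sdiff_subset hpA).2 rfl

lemma eq_or_exists_eq_add_unitStep (hz : z ∈ gridSquare p) (hz' : z ∈ gridSquare q)
    (hpq : q.1 = p.1 ∨ q.2 = p.2) : q = p ∨ ∃ u ∈ unitSteps, q = p + u := by
  obtain ⟨m, n⟩ := p
  obtain ⟨k, l⟩ := q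
  rw [mem_gridSquare] at hz hz'
  dsimp only at hz hz' hpq
  rcases hpq with rfl | rfl
  · rcases eq_or_eq_add_one_or_eq_sub_one_of_abs_le hz.2 hz'.2 with rfl | ⟨rfl, -⟩ | ⟨rfl, -⟩
    · exact Or.inl rfl
    · exact Or.inr ⟨(0, 1), by simp [unitSteps], by simp⟩
    · exact Or.inr ⟨(0, -1), by simp [unitSteps], by simp [sub_eq_add_neg]⟩
  · rcases eq_or_eq_add_one_or_eq_sub_one_of_abs_le hz.1 hz'.1 with rfl | ⟨rfl, -⟩ | ⟨rfl, -⟩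
    · exact Or.inl rfl
    · exact Or.inr ⟨(1, 0), by simp [unitSteps], by simp⟩
    · exact Or.inr ⟨(-1, 0), by simp [unitSteps], by simp [sub_eq_add_neg]⟩

/-- Two squares with a common point are joined, through squares containing that point, by at most
one horizontal and one vertical step. -/
lemma mem_of_mem_gridSquare_of_notMem_gridUnion (hA : ∀ p ∈ A \ S, ∀ u ∈ unitSteps, p + u ∈ A)
    (hp : p ∈ A) (hzp : z ∈ gridSquare p) (hzq : z ∈ gridSquare q) (hzS : z ∉ gridUnion S) :
    q ∈ A := by
  have hmove : ∀ {p q}, p ∈ A → z ∈ gridSquare p → z ∈ gridSquare q →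
      q.1 = p.1 ∨ q.2 = p.2 → q ∈ A := by
    intro p q hp hzp hzq hpq
    rcases eq_or_exists_eq_add_unitStep hzp hzq hpq with rfl | ⟨u, hu, rfl⟩
    · exact hp
    · exact hA p ⟨hp, fun hpS ↦ hzS (gridSquare_subset_gridUnion hpS hzp)⟩ u hu
  have hzcorner : z ∈ gridSquare (q.1, p.2) :=
    mem_gridSquare.mpr ⟨(mem_gridSquare.mp hzq).1, (mem_gridSquare.mp hzp).2⟩
  exact hmove (hmove hp hzp hzcorner (Or.inr rfl)) hzcorner hzq (Or.inl rfl)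

lemma isOpen_gridUnion_sdiff (hA : ∀ p ∈ A \ S, ∀ u ∈ unitSteps, p + u ∈ A) :
    IsOpen (gridUnion A \ gridUnion S) := by
  have hcompl : gridUnion A \ gridUnion S = (gridUnion S ∪ gridUnion Aᶜ)ᶜ := by
    ext z
    rw [mem_sdiff, compl_union, mem_inter_iff, and_comm]
    refine and_congr_right fun hzS ↦ ⟨fun hzA hzA' ↦ ?_, fun hzA' ↦ ?_⟩
    · obtain ⟨p, hp, hzp⟩ := mem_gridUnion.mp hzA
      obtain ⟨q, hq, hzq⟩ := mem_gridUnion.mp hzA'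
      exact hq (mem_of_mem_gridSquare_of_notMem_gridUnion hA hp hzp hzq hzS)
    · obtain ⟨p, hzp⟩ := exists_mem_gridSquare z
      have hp : p ∈ A := by_contra fun hp ↦ hzA' (gridSquare_subset_gridUnion hp hzp)
      exact gridSquare_subset_gridUnion hp hzp
  rw [hcompl]
  exact ((isClosed_gridUnion S).union (isClosed_gridUnion Aᶜ)).isOpen_compl

lemma HasNoHoles.gridUnion_subset {W : Set (ℝ × ℝ)} (hW : HasNoHoles W) (hAfin : A.Finite)
    (hA : ∀ p ∈ A \ S, ∀ u ∈ unitSteps, p + u ∈ A) (hSW : gridUnion S ⊆ W) :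
    gridUnion A ⊆ W := by
  have hO := isOpen_gridUnion_sdiff hA
  have hcl : closure (gridUnion A \ gridUnion S) ⊆ gridUnion A :=
    closure_minimal sdiff_subset (isClosed_gridUnion A)
  have hfr : frontier (gridUnion A \ gridUnion S) ⊆ gridUnion S := by
    rw [hO.frontier_eq]
    rintro z ⟨hz, hz'⟩
    exact by_contra fun hzS ↦ hz' ⟨hcl hz, hzS⟩
  have hcompact := (isCompact_gridUnion hAfin).of_isClosed_subset isClosed_closure hcl
  exact (sdiff_subset_iff.mp (hW _ hO hcompact (hfr.trans hSW))).trans (union_subset hSW subset_rfl)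

/-- The squares meeting `K` lie in `W`, hence so do those which remain after the removals. -/
lemma HasNoHoles.exists_continuous_eqOn_id_of_closedBall_subset {W K : Set (ℝ × ℝ)}
    (hW : HasNoHoles W) (hWc : IsPathConnected W) (hK : IsCompact K)
    (hKW : ∀ z ∈ K, Metric.closedBall z 2 ⊆ W) :
    ∃ F : ℝ × ℝ → ℝ × ℝ, Continuous F ∧ (∀ z, F z ∈ W) ∧ EqOn F id K := by
  let S := {p | (gridSquare p ∩ K).Nonempty}
  have hS : S.Finite := locallyFinite_gridSquare.finite_nonempty_inter_compact hK
  have hSW : gridUnion S ⊆ W := iUnion₂_subset fun p ⟨z, hzp, hzK⟩ ↦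
    (gridSquare_subset_closedBall hzp).trans (hKW z hzK)
  have hKS : K ⊆ gridUnion S := fun z hz ↦ by
    obtain ⟨p, hp⟩ := exists_mem_gridSquare z
    exact gridSquare_subset_gridUnion (A := S) ⟨z, hp, hz⟩ hp
  obtain ⟨A, hAfin, hSA, hext, hA⟩ := exists_finite_mapExtends_gridUnion_univ hWc hS
  obtain ⟨F, hF, hFW, hFid⟩ := hext id continuousOn_id (hW.gridUnion_subset hAfin hA hSW)
  exact ⟨F, continuousOn_univ.mp hF, fun z ↦ hFW (mem_univ z),
    hFid.mono (hKS.trans (gridUnion_mono hSA))⟩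

end Filling

section Plane

lemma HasNoHoles.exists_continuous_eqOn_id {W K : Set ℂ} (hW : HasNoHoles W) (hWo : IsOpen W)
    (hWc : IsPathConnected W) (hK : IsCompact K) (hKW : K ⊆ W) :
    ∃ F : ℂ → ℂ, Continuous F ∧ (∀ z, F z ∈ W) ∧ EqOn F id K := by
  obtain ⟨ε, hε, hthick⟩ := hK.exists_thickening_subset_open hWo hKW
  have hδ : ((ε / 5 : ℝ) : ℂ) ≠ 0 := by exact_mod_cast (div_pos hε (by norm_num)).ne'
  let ψ := Complex.equivRealProdCLM.symm
  let φ : ℝ × ℝ ≃ₜ ℂ := ψ.toHomeomorph.trans (Homeomorph.mulLeft₀ _ hδ)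
  have hφ : ∀ z w, dist z w ≤ 2 → dist (φ z) (φ w) < ε := fun z w hzw ↦ by
    have hcoord : |z.1 - w.1| ≤ 2 ∧ |z.2 - w.2| ≤ 2 := by
      simpa only [Prod.dist_eq, Real.dist_eq, max_le_iff] using hzw
    have hψ : ‖ψ z - ψ w‖ ≤ |z.1 - w.1| + |z.2 - w.2| := by
      simpa [ψ] using Complex.norm_le_abs_re_add_abs_im (ψ z - ψ w)
    calc dist (φ z) (φ w) = ε / 5 * ‖ψ z - ψ w‖ := by
          simp [φ, dist_eq_norm, ← mul_sub, abs_of_pos hε]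
      _ ≤ ε / 5 * 4 := by gcongr; linarith
      _ < ε := by linarith
  obtain ⟨F, hF, hFW, hFid⟩ :=
    (hW.preimage_homeomorph φ).exists_continuous_eqOn_id_of_closedBall_subset
      (φ.isPathConnected_preimage.mpr hWc) (φ.isCompact_preimage.mpr hK)
      fun z hz w hw ↦ hthick (Metric.mem_thickening_iff.mpr ⟨φ z, hz, hφ w z hw⟩)
  refine ⟨φ ∘ F ∘ φ.symm, by fun_prop, fun z ↦ hFW _, fun z hz ↦ ?_⟩
  have hzK : φ.symm z ∈ φ ⁻¹' K := by simpa only [mem_preimage, φ.apply_symm_apply] using hz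
  simp only [Function.comp_apply, hFid hzK, id_eq, φ.apply_symm_apply]

/-- A contraction in `Z` of a loop in `W` is carried into `W` by a map fixing the loop. -/
lemma isSimplyConnected_of_forall_isCompact {Z : Type*} [TopologicalSpace Z]
    [SimplyConnectedSpace Z] {W : Set Z} (hW : IsPathConnected W)
    (hfix : ∀ K ⊆ W, IsCompact K → ∃ F : Z → Z, Continuous F ∧ (∀ z, F z ∈ W) ∧ EqOn F id K) :
    IsSimplyConnected W := by
  rw [isSimplyConnected_iff_exists_homotopy_refl_forall_mem]
  refine ⟨hW, fun x γ hγ ↦ ?_⟩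
  obtain ⟨F, hF, hFW, hFid⟩ :=
    hfix (range γ) (range_subset_iff.mpr hγ) (isCompact_range γ.continuous)
  have hFγ : ∀ t, F (γ t) = γ t := fun t ↦ hFid (mem_range_self t)
  have hFx : F x = x := by simpa using hFγ 0
  obtain ⟨H⟩ := SimplyConnectedSpace.paths_homotopic γ (Path.refl x)
  have hγF : (⟨F, hF⟩ : C(Z, Z)).comp γ.toContinuousMap = γ := ContinuousMap.ext hFγ
  have hxF : (⟨F, hF⟩ : C(Z, Z)).comp (Path.refl x).toContinuousMap = Path.refl x :=
    ContinuousMap.ext fun _ ↦ hFx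
  exact ⟨(H.compContinuousMap ⟨F, hF⟩).cast hγF hxF, fun q ↦ hFW _⟩

theorem HasNoHoles.isSimplyConnected {W : Set ℂ} (hW : HasNoHoles W) (hWo : IsOpen W)
    (hWc : IsPathConnected W) : IsSimplyConnected W :=
  isSimplyConnected_of_forall_isCompact hWc fun _ hKW hK ↦
    hW.exists_continuous_eqOn_id hWo hWc hK hKW

theorem isSimplyConnected_connectedComponentIn_inter_preimage {U V : Set ℂ} (hUo : IsOpen U)
    (hVo : IsOpen V) (hU : IsSimplyConnected U) (hV : IsSimplyConnected V) {g : ℂ → ℂ}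
    (hg : ContinuousOn g U) (hopen : ∀ s ⊆ U, IsOpen s → IsOpen (g '' s)) {x : ℂ}
    (hx : x ∈ U ∩ g ⁻¹' V) : IsSimplyConnected (connectedComponentIn (U ∩ g ⁻¹' V) x) := by
  have hGo : IsOpen (U ∩ g ⁻¹' V) := hg.isOpen_inter_preimage hUo hVo
  have hWo : IsOpen (connectedComponentIn (U ∩ g ⁻¹' V) x) := hGo.connectedComponentIn
  have hG : HasNoHoles (U ∩ g ⁻¹' V) := .inter_preimage (.of_isSimplyConnected hU hUo)
    (.of_isSimplyConnected hV hVo) hg hopen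
  exact (hasNoHoles_connectedComponentIn hG hGo x).isSimplyConnected hWo
    (hWo.isConnected_iff_isPathConnected.mp (isConnected_connectedComponentIn_iff.mpr hx))

end Plane

/-- if `U`, `V` are simply connected open subsets of `ℂ` and
`g : U → ℂ` is holomorphic, then every connected component of
`g⁻¹(V) = {z ∈ U | g z ∈ V}` is simply connected. -/
theorem stmt_12 (U V : Set ℂ) (hU : IsOpen U) (hV : IsOpen V)
    (hUsc : SimplyConnectedSpace U) (hVsc : SimplyConnectedSpace V)
    (g : ℂ → ℂ) (hg : DifferentiableOn ℂ g U)
    (W : Set ℂ)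
    (hW : ∃ x ∈ {z ∈ U | g z ∈ V}, W = connectedComponentIn {z ∈ U | g z ∈ V} x) :
    SimplyConnectedSpace W := by
  obtain ⟨x, hx, rfl⟩ := hW
  have hUs : IsSimplyConnected U := hUsc
  have hUc : IsPreconnected U := hUs.isPathConnected.isConnected.isPreconnected
  rcases (hg.analyticOnNhd hU).is_constant_or_isOpen hUc with ⟨w, hw⟩ | hopen
  · have hG : {z ∈ U | g z ∈ V} = U := sep_eq_self_iff_mem_true.mpr fun z hz ↦ by
      rw [hw z hz, ← hw x hx.1]
      exact hx.2
    rw [hG, hUc.connectedComponentIn hx.1]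
    exact hUsc
  · exact isSimplyConnected_connectedComponentIn_inter_preimage hU hV hUs hVsc hg.continuousOn
      hopen hx
end
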